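/- arXiv:2408.15592 — 9 statements merged into one kernel-verified Lean document; each statement's English description precedes it below -/
import Mathlib

section
/- Let A ⊆ E^n. Then A^⊥ ∩ F^n = χ(A)^⊥ ∩ F^n, and wt(A) = n − dim_F(A^⊥ ∩ F^n). -/
/-!
Expand each `α ∈ A` over `F`: the vectors `φ ∘ α`, for `φ` an `F`-linear functional on `E`, span an
`F`-subspace of `F^n`. A vector lies in the `E`-span of `U ≤ F^n` exactly when all its expansions
lie in `U`, so this subspace is `χ(A)`. Functionals separate points of `E` and
`φ (∑ i, β i • α i) = (φ ∘ α) ⬝ᵥ β`, so `A^⊥ ∩ F^n` is the orthogonal complement of `χ(A)` in `F^n`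
for the dot product, which is nondegenerate.
-/

open Submodule Pointwise

/-- The coordinatewise inclusion of `F^n` into `E^n`. -/
noncomputable def fIncl (F E : Type*) [Field F] [Field E] [Algebra F E] (n : ℕ) :
    (Fin n → F) →ₗ[F] (Fin n → E) :=
  LinearMap.compLeft (Algebra.linearMap F E) (Fin n)

/-- The rank support `χ(A)` of `A ⊆ E^n`: the smallest `F`-subspace `U` of `F^n`
such that `A` is contained in the `E`-span of (the image in `E^n` of) `U`. -/
noncomputable def rankSupport (F E : Type*) [Field F] [Field E] [Algebra F E] (n : ℕ)
    (A : Set (Fin n → E)) : Submodule F (Fin n → F) :=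
  sInf {U : Submodule F (Fin n → F) |
    A ⊆ (Submodule.span E (fIncl F E n '' (U : Set (Fin n → F))) : Set (Fin n → E))}

/-- The rank support weight `wt(A) = dim_F χ(A)`. -/
noncomputable def wt (F E : Type*) [Field F] [Field E] [Algebra F E] (n : ℕ)
    (A : Set (Fin n → E)) : ℕ :=
  Module.finrank F (rankSupport F E n A)

/-- `A^⊥ ∩ F^n`, realized as the `F`-subspace of `F^n` of vectors `β` with
`Σ_i α_i β_i = 0` for all `α ∈ A`. -/
noncomputable def dualCapF (F E : Type*) [Field F] [Field E] [Algebra F E] (n : ℕ)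
    (A : Set (Fin n → E)) : Submodule F (Fin n → F) :=
  ⨅ α ∈ A, LinearMap.ker
    (∑ i, α i • ((Algebra.linearMap F E).comp (LinearMap.proj i) : (Fin n → F) →ₗ[F] E))

section Expansion

variable {R M S ι : Type*} [CommSemiring R]

variable (R) in
/-- The `R`-submodule of `ι → R` spanned by all expansions `φ ∘ α` of the vectors `α ∈ A`, where
`φ` runs over the `R`-linear functionals on `M`. When `M` is finite free, it is the sum of the row
spaces of the coordinate matrices of the `α ∈ A` in any basis of `M`; using all functionals avoids
the choice of a basis. -/
def expansionSpan [AddCommMonoid M] [Module R M] (A : Set (ι → M)) : Submodule R (ι → R) :=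
  span R {v | ∃ α ∈ A, ∃ φ : Module.Dual R M, φ ∘ α = v}

theorem expansionSpan_le_iff [AddCommMonoid M] [Module R M] {A : Set (ι → M)}
    {U : Submodule R (ι → R)} :
    expansionSpan R A ≤ U ↔ ∀ α ∈ A, ∀ φ : Module.Dual R M, φ ∘ α ∈ U := by
  rw [expansionSpan, span_le]
  refine ⟨fun h α hα φ => h ⟨α, hα, φ, rfl⟩, ?_⟩
  rintro h _ ⟨α, hα, φ, rfl⟩
  exact h α hα φ

section Algebra

variable [Semiring S] [Algebra R S] {U : Submodule R (ι → R)}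

theorem dual_comp_mem_of_mem_span_image_compLeft {x : ι → S}
    (hx : x ∈ span S ((Algebra.linearMap R S).compLeft ι '' U)) (φ : Module.Dual R S) :
    φ ∘ x ∈ U := by
  change φ.compLeft ι x ∈ U
  induction hx using span_induction generalizing φ with
  | mem _ hx =>
    obtain ⟨u, hu, rfl⟩ := hx
    have expansion_eq : φ.compLeft ι ((Algebra.linearMap R S).compLeft ι u) = φ 1 • u := by
      ext i
      simp [Algebra.algebraMap_eq_smul_one, mul_comm]
    exact expansion_eq ▸ U.smul_mem _ hu
  | zero => exact map_zero (φ.compLeft ι) ▸ U.zero_mem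
  | add x y _ _ hx hy => exact map_add (φ.compLeft ι) x y ▸ U.add_mem (hx φ) (hy φ)
  | smul a _ _ hx => exact hx (φ ∘ₗ LinearMap.mulLeft R a)

theorem mem_span_image_compLeft_of_forall_dual_comp_mem [Finite ι] [Module.Projective R S]
    {x : ι → S} (hx : ∀ φ : Module.Dual R S, φ ∘ x ∈ U) :
    x ∈ span S ((Algebra.linearMap R S).compLeft ι '' U) := by
  classical
  cases nonempty_fintype ι
  -- A section `s` of `(S →₀ R) → S` plays the role of the coordinates in a basis.
  obtain ⟨s, hs⟩ := Module.projective_def'.mp ‹Module.Projective R S›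
  let coord (a : S) : Module.Dual R S := Finsupp.lapply a ∘ₗ s
  let T : Finset S := Finset.univ.biUnion fun i => (s (x i)).support
  have expansion : x = ∑ a ∈ T, a • (Algebra.linearMap R S).compLeft ι (coord a ∘ x) := by
    ext i
    have support_subset : s (x i) ∈ Finsupp.supported R R (T : Set S) :=
      Finset.coe_subset.mpr <|
        Finset.subset_biUnion_of_mem (fun i => (s (x i)).support) (Finset.mem_univ i)
    calc x i = Finsupp.linearCombination R id (s (x i)) := (LinearMap.congr_fun hs (x i)).symm
      _ = ∑ a ∈ T, s (x i) a • a :=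
        Finsupp.linearCombination_apply_of_mem_supported R support_subset
      _ = _ := by simp [coord, Algebra.smul_def, Algebra.commutes]
  rw [expansion]
  exact sum_mem fun a _ => smul_mem _ a <| subset_span <| Set.mem_image_of_mem _ <| hx (coord a)

theorem subset_span_image_compLeft_iff [Finite ι] [Module.Projective R S] {A : Set (ι → S)} :
    A ⊆ span S ((Algebra.linearMap R S).compLeft ι '' U) ↔ expansionSpan R A ≤ U := by
  rw [expansionSpan_le_iff]
  exact forall₂_congr fun _ _ =>
    ⟨dual_comp_mem_of_mem_span_image_compLeft, mem_span_image_compLeft_of_forall_dual_comp_mem⟩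

end Algebra

theorem mem_orthogonal_expansionSpan_iff [AddCommMonoid M] [Module R M]
    [Module.Projective R M] [Fintype ι] {A : Set (ι → M)} {β : ι → R} :
    β ∈ LinearMap.BilinForm.orthogonal (dotProductBilin R R) (expansionSpan R A) ↔
      ∀ α ∈ A, ∑ i, β i • α i = 0 := by
  have expansion_dotProduct (φ : Module.Dual R M) (α : ι → M) :
      (φ ∘ α) ⬝ᵥ β = φ (∑ i, β i • α i) := by
    simp [dotProduct, mul_comm]
  calc
    _ ↔ expansionSpan R A ≤ LinearMap.ker ((dotProductBilin R R).flip β) := Iff.rfl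
    _ ↔ ∀ α ∈ A, ∀ φ : Module.Dual R M, (φ ∘ α) ⬝ᵥ β = 0 := expansionSpan_le_iff
    _ ↔ ∀ α ∈ A, ∑ i, β i • α i = 0 := by
      simp only [expansion_dotProduct, Module.forall_dual_apply_eq_zero_iff]

end Expansion

theorem dotProductBilin_nondegenerate {R ι : Type*} [CommSemiring R] [Fintype ι] :
    (dotProductBilin R R : LinearMap.BilinForm R (ι → R)).Nondegenerate :=
  ⟨fun v hv => dotProduct_eq_zero v hv,
    fun v hv => dotProduct_eq_zero v fun w => (dotProduct_comm v w).trans (hv w)⟩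

theorem finrank_add_finrank_orthogonal_dotProductBilin {K ι : Type*} [Field K] [Fintype ι]
    (U : Submodule K (ι → K)) :
    Module.finrank K U +
      Module.finrank K (LinearMap.BilinForm.orthogonal (dotProductBilin K K) U) =
        Fintype.card ι := by
  rw [LinearMap.BilinForm.finrank_add_finrank_orthogonal',
    LinearMap.BilinForm.Nondegenerate.ker_eq_bot dotProductBilin_nondegenerate, inf_bot_eq,
    finrank_bot, add_zero, Module.finrank_fintype_fun_eq_card]

section RankSupport

variable {F E : Type*} [Field F] [Field E] [Algebra F E] {n : ℕ}

theorem rankSupport_eq_expansionSpan (A : Set (Fin n → E)) :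
    rankSupport F E n A = expansionSpan F A := by
  simp only [rankSupport, fIncl, subset_span_image_compLeft_iff]
  exact csInf_Ici

theorem mem_dualCapF_iff {A : Set (Fin n → E)} {β : Fin n → F} :
    β ∈ dualCapF F E n A ↔ ∀ α ∈ A, ∑ i, β i • α i = 0 := by
  simp [dualCapF, Algebra.smul_def, mul_comm]

theorem dualCapF_eq_orthogonal_rankSupport (A : Set (Fin n → E)) :
    dualCapF F E n A =
      LinearMap.BilinForm.orthogonal (dotProductBilin F F) (rankSupport F E n A) := by
  ext β
  rw [mem_dualCapF_iff, rankSupport_eq_expansionSpan, mem_orthogonal_expansionSpan_iff]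

theorem dualCapF_image_fIncl (U : Submodule F (Fin n → F)) :
    dualCapF F E n (fIncl F E n '' U) =
      LinearMap.BilinForm.orthogonal (dotProductBilin F F) U := by
  ext β
  have sum_smul_fIncl (u : Fin n → F) :
      ∑ i, β i • fIncl F E n u i = algebraMap F E (u ⬝ᵥ β) := by
    simp [fIncl, dotProduct, Algebra.smul_def, mul_comm]
  simp only [mem_dualCapF_iff, Set.forall_mem_image, SetLike.mem_coe, sum_smul_fIncl,
    map_eq_zero]
  rfl

end RankSupport

theorem statement0_general (F E : Type*) [Field F] [Field E] [Algebra F E] (n : ℕ)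
    (A : Set (Fin n → E)) :
    dualCapF F E n A
        = dualCapF F E n (fIncl F E n '' (rankSupport F E n A : Set (Fin n → F))) ∧
      Module.finrank F (rankSupport F E n A) + Module.finrank F (dualCapF F E n A) = n := by
  rw [dualCapF_image_fIncl, dualCapF_eq_orthogonal_rankSupport,
    finrank_add_finrank_orthogonal_dotProductBilin, Fintype.card_fin]
  exact ⟨rfl, rfl⟩

/-- Lemma 2.1 (1): `A^⊥ ∩ F^n = χ(A)^⊥ ∩ F^n` and `wt(A) = n - dim_F (A^⊥ ∩ F^n)`. -/
theorem statement0 (F E : Type*) [Field F] [Field E] [Algebra F E]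
    [FiniteDimensional F E] (m : ℕ) (hm : Module.finrank F E = m)
    (n : ℕ) (hn : 0 < n) (A : Set (Fin n → E)) :
    dualCapF F E n A
        = dualCapF F E n (fIncl F E n '' (rankSupport F E n A : Set (Fin n → F))) ∧
      Module.finrank F (rankSupport F E n A) = n - Module.finrank F (dualCapF F E n A) :=
  (statement0_general F E n A).imp_right Nat.eq_sub_of_add_eq
end

section
/- Let R be a division ring, L a left R-module with dim_R(L) = k < ∞, S ⊆ L with 0 ∈ S, and r ∈ {0,1,…,k−1}. Then S is a cutting r-blocking set of L if and only if for all R-submodules W and I of L with dim_R(W) = k−r−1 and dim_R(I) = 1, it holds that (S + W) ∩ I ≠ {0}, where S + W = {s + w : s ∈ S, w ∈ W}. -/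
open Submodule Pointwise

/-- `S` is a cutting `r`-blocking set of `L`: for every submodule `V` of codimension `r`,
the span of `S ∩ V` is all of `V`. -/
def IsCuttingBlocking (R : Type*) {L : Type*} [DivisionRing R] [AddCommGroup L] [Module R L]
    (S : Set L) (r : ℕ) : Prop :=
  ∀ V : Submodule R L, Module.finrank R V = Module.finrank R L - r →
    Submodule.span R (S ∩ (V : Set L)) = V

/-!
If `(S + W) ∩ I = {0}`, then `W` and `I` are independent and every element of `S` in `V = W ⊔ I`
already lies in `W`, and conversely. For simple `I` this `W` is a maximal submodule of `V`, and in
a semisimple module every maximal submodule of `V` has such a complement `I`. So the condition on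
`W` and `I` says that `S ∩ V` lies in no maximal submodule of `V`, that is, that it spans `V`.
-/

section

variable {α : Type*}

theorem eq_iff_forall_covBy_not_le [PartialOrder α] [IsStronglyCoatomic α] {a b : α}
    (hab : a ≤ b) : a = b ↔ ∀ c, c ⋖ b → ¬ a ≤ c := by
  refine ⟨fun h c hc hac ↦ hc.lt.not_ge (h ▸ hac), fun h ↦ hab.eq_of_not_lt fun hlt ↦ ?_⟩
  obtain ⟨c, hac, hcb⟩ := exists_le_covBy_of_lt hlt
  exact h c hcb hac

theorem covBy_iff_exists_isAtom_disjoint_sup_eq [Lattice α] [BoundedOrder α] [IsModularLattice α]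
    [ComplementedLattice α] {a b : α} :
    a ⋖ b ↔ ∃ c, IsAtom c ∧ Disjoint a c ∧ a ⊔ c = b := by
  constructor
  · intro hab
    obtain ⟨c, hdisj, rfl⟩ := IsModularLattice.exists_disjoint_and_sup_eq hab.le
    refine ⟨c, bot_covBy_iff.1 ?_, hdisj, rfl⟩
    simpa only [hdisj.eq_bot] using inf_covBy_of_covBy_sup_left hab
  · rintro ⟨c, hc, hdisj, rfl⟩
    refine covBy_sup_of_inf_covBy_right ?_
    simpa only [hdisj.eq_bot] using hc.bot_covBy

end

section

variable {R L : Type*} [Ring R] [AddCommGroup L] [Module R L]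

theorem length_sup_of_disjoint {W I : Submodule R L} (h : Disjoint W I) :
    Module.length R ↥(W ⊔ I) = Module.length R W + Module.length R I := by
  have hinj : Function.Injective (W.subtype.coprod I.subtype) := by
    rw [← LinearMap.ker_eq_bot, LinearMap.ker_coprod_of_disjoint_range _ _ (by simpa using h)]
    simp
  rw [Submodule.sup_eq_range, ← (LinearEquiv.ofInjective _ hinj).length_eq, Module.length_prod]

theorem add_inter_eq_singleton_zero_iff {S : Set L} (h0 : 0 ∈ S) {W I : Submodule R L} :
    (S + (W : Set L)) ∩ I = {0} ↔ Disjoint W I ∧ S ∩ ↑(W ⊔ I) ⊆ (W : Set L) := by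
  constructor
  · intro h
    have eq_zero {s w : L} (hs : s ∈ S) (hw : w ∈ W) (hI : s + w ∈ I) : s + w = 0 :=
      h.subset ⟨Set.add_mem_add hs hw, hI⟩
    constructor
    · rw [Submodule.disjoint_def]
      intro x hxW hxI
      simpa using eq_zero h0 hxW (by simpa using hxI)
    · rintro s ⟨hs, hsup⟩
      obtain ⟨w, hw, i, hi, rfl⟩ := Submodule.mem_sup.1 hsup
      have hi0 : i = 0 := by simpa using eq_zero hs (W.neg_mem hw) (by simpa using hi)
      simpa [hi0] using hw
  · rintro ⟨hdisj, hsub⟩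
    refine Set.eq_singleton_iff_unique_mem.2 ⟨⟨⟨0, h0, 0, W.zero_mem, add_zero 0⟩, I.zero_mem⟩, ?_⟩
    rintro _ ⟨⟨s, hs, w, hw, rfl⟩, hI⟩
    have hsup : s ∈ W ⊔ I := by
      simpa using sub_mem (Submodule.mem_sup_right hI) (Submodule.mem_sup_left hw)
    exact Submodule.disjoint_def.1 hdisj _ (W.add_mem (hsub ⟨hs, hsup⟩) hw) hI

theorem span_inter_eq_iff_forall_isAtom [IsSemisimpleModule R L] {S : Set L}
    {V : Submodule R L} :
    span R (S ∩ V) = V ↔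
      ∀ W I : Submodule R L, IsAtom I → Disjoint W I → W ⊔ I = V → ¬ S ∩ V ⊆ W := by
  have : IsStronglyCoatomic (Submodule R L) := ComplementedLattice.isStronglyCoatomic
  rw [eq_iff_forall_covBy_not_le (span_le.2 Set.inter_subset_right)]
  simp only [covBy_iff_exists_isAtom_disjoint_sup_eq, span_le, forall_exists_index, and_imp]

theorem statement2_general [IsSemisimpleModule R L] {S : Set L} (h0 : 0 ∈ S) (n : ℕ∞) :
    (∀ V : Submodule R L, Module.length R V = n + 1 → span R (S ∩ V) = V) ↔
      ∀ W I : Submodule R L, Module.length R W = n → IsSimpleModule R I →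
        (S + (W : Set L)) ∩ I ≠ {0} := by
  constructor
  · intro hS W I hW hI h
    obtain ⟨hdisj, hsub⟩ := (add_inter_eq_singleton_zero_iff h0).1 h
    have hV : Module.length R ↥(W ⊔ I) = n + 1 := by
      rw [length_sup_of_disjoint hdisj, hW, Module.length_eq_one R I]
    exact span_inter_eq_iff_forall_isAtom.1 (hS _ hV) W I (isSimpleModule_iff_isAtom.1 hI)
      hdisj rfl hsub
  · intro h V hV
    refine span_inter_eq_iff_forall_isAtom.2 fun W I hatom hdisj hsup hsub ↦ ?_
    subst hsup
    have hI : IsSimpleModule R I := isSimpleModule_iff_isAtom.2 hatom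
    have hW : Module.length R W = n := by
      rw [length_sup_of_disjoint hdisj, Module.length_eq_one R I] at hV
      exact WithTop.add_right_cancel ENat.one_ne_top hV
    exact h W I hW hI ((add_inter_eq_singleton_zero_iff h0).2 ⟨hdisj, hsub⟩)

end

/-- Proposition 2.1: for `0 ∈ S ⊆ L` and `r ∈ {0, …, k-1}`, `S` is a cutting `r`-blocking
set of `L` iff `(S + W) ∩ I ≠ {0}` for all submodules `W, I` with `dim W = k - r - 1`
and `dim I = 1`. -/
theorem statement2 (R L : Type*) [DivisionRing R] [AddCommGroup L] [Module R L]
    [Module.Finite R L] (k : ℕ) (hk : Module.finrank R L = k)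
    (S : Set L) (h0 : (0 : L) ∈ S) (r : ℕ) (hr : r + 1 ≤ k) :
    IsCuttingBlocking R S r ↔
      ∀ W I : Submodule R L, Module.finrank R W = k - r - 1 → Module.finrank R I = 1 →
        (S + (W : Set L)) ∩ (I : Set L) ≠ {0} := by
  obtain ⟨n, rfl⟩ : ∃ n, k = n + 1 + r := ⟨k - r - 1, by omega⟩
  simpa only [IsCuttingBlocking, hk, Nat.add_sub_cancel, Module.length_eq_finrank,
    isSimpleModule_iff_finrank_eq_one, ← Nat.cast_add_one, Nat.cast_inj]
    using statement2_general (R := R) h0 n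
end

section
/- Let X be a k-dimensional E-vector space, (b,w) ∈ ℕ² with b ≤ k, and let U be an F-subspace of X that is (b,w)-evasive in X. Let A be an E-subspace of X with dim_E(A) = a ≤ b, and write v = dim_F(U ∩ A). Then the image (U + A)/A of U in the quotient E-vector space X/A is (b−a, w−v)-evasive in X/A. -/
open Submodule Pointwise

/-- `J` is `(h, r)`-evasive in the `E`-vector space `X`. -/
def IsEvasive (F E : Type*) {X : Type*} [Field F] [Field E] [Algebra F E]
    [AddCommGroup X] [Module E X] [Module F X] [IsScalarTower F E X]
    (J : Submodule F X) (h : ℕ) (r : ℤ) : Prop :=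
  Submodule.span E (J : Set X) = ⊤ ∧
    ∀ M : Submodule E X, Module.finrank E M = h →
      (Module.finrank F ↥(J ⊓ M.restrictScalars F) : ℤ) ≤ r

/-!
The preimage under `π : X → X ⧸ A` of an `E`-subspace `M` has dimension `dim M + dim A`, so the
evasiveness of `U` applies to it. Since `π` maps `U ∩ π⁻¹(M)` onto `π(U) ∩ M` with kernel `U ∩ A`,
rank–nullity over `F` turns the bound `w` upstairs into `w - v` downstairs.
-/

section RankNullity

variable {K V W : Type*} [DivisionRing K] [AddCommGroup V] [Module K V] [AddCommGroup W]
  [Module K W]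

theorem finrank_map_add_finrank_inf_ker (f : V →ₗ[K] W) (P : Submodule K V)
    [FiniteDimensional K P] :
    Module.finrank K (P.map f) + Module.finrank K ↥(P ⊓ LinearMap.ker f) =
      Module.finrank K P := by
  rw [← LinearMap.finrank_range_add_finrank_ker (f.domRestrict P), LinearMap.range_domRestrict,
    LinearMap.ker_domRestrict, ← finrank_map_subtype_eq P, map_comap_subtype]

theorem finrank_map_inf_add_finrank_inf_ker (f : V →ₗ[K] W) (P : Submodule K V)
    [FiniteDimensional K P] (Q : Submodule K W) :
    Module.finrank K ↥(P.map f ⊓ Q) + Module.finrank K ↥(P ⊓ LinearMap.ker f) =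
      Module.finrank K ↥(P ⊓ Q.comap f) := by
  rw [← finrank_map_add_finrank_inf_ker f (P ⊓ Q.comap f), ← map_inf_eq_map_inf_comap, inf_assoc,
    inf_eq_right.mpr (LinearMap.ker_le_comap f)]

theorem finrank_comap_of_surjective [FiniteDimensional K V] {f : V →ₗ[K] W}
    (hf : Function.Surjective f) (Q : Submodule K W) :
    Module.finrank K (Q.comap f) = Module.finrank K Q + Module.finrank K (LinearMap.ker f) := by
  rw [← finrank_map_add_finrank_inf_ker f (Q.comap f), map_comap_eq_of_surjective hf,
    inf_eq_right.mpr (LinearMap.ker_le_comap f)]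

end RankNullity

section RestrictScalars

variable {R S M N : Type*} [Semiring R] [Semiring S] [AddCommMonoid M] [Module R M] [Module S M]

theorem span_map_restrictScalars [AddCommMonoid N] [Module R N] [Module S N]
    [LinearMap.CompatibleSMul M N R S] (f : M →ₗ[S] N) (U : Submodule R M) :
    span S (U.map (f.restrictScalars R) : Set N) = (span S (U : Set M)).map f := by
  rw [map_coe, LinearMap.coe_restrictScalars, span_image]

theorem finite_of_span_eq_top [SMul R S] [IsScalarTower R S M] {U : Submodule R M}
    [Module.Finite R U] (hU : span S (U : Set M) = ⊤) : Module.Finite S M := by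
  obtain ⟨s, rfl⟩ := Module.Finite.iff_fg.mp ‹Module.Finite R U›
  exact ⟨s, by rwa [span_span_of_tower] at hU⟩

end RestrictScalars

theorem statement3_general {F E X Y : Type*} [Field F] [Field E] [Algebra F E]
    [AddCommGroup X] [Module E X] [Module F X] [IsScalarTower F E X]
    [AddCommGroup Y] [Module E Y] [Module F Y] [IsScalarTower F E Y]
    {h : ℕ} {r : ℤ} {U : Submodule F X} [FiniteDimensional F U] (hU : IsEvasive F E U h r)
    {f : X →ₗ[E] Y} (hf : Function.Surjective f)
    (hker : Module.finrank E (LinearMap.ker f) ≤ h) :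
    IsEvasive F E (U.map (f.restrictScalars F)) (h - Module.finrank E (LinearMap.ker f))
      (r - Module.finrank F ↥(U ⊓ (LinearMap.ker f).restrictScalars F)) := by
  obtain ⟨span_eq_top, finrank_inf_le⟩ := hU
  have : FiniteDimensional E X := finite_of_span_eq_top span_eq_top
  refine ⟨?_, fun M hM ↦ ?_⟩
  · rw [span_map_restrictScalars, span_eq_top, Submodule.map_top, LinearMap.range_eq_top.mpr hf]
  · have finrank_comap : Module.finrank E (M.comap f) = h := by
      rw [finrank_comap_of_surjective hf, hM, Nat.sub_add_cancel hker]
    have rank_nullity : Module.finrank F ↥(U.map (f.restrictScalars F) ⊓ M.restrictScalars F) +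
        Module.finrank F ↥(U ⊓ (LinearMap.ker f).restrictScalars F) =
        Module.finrank F ↥(U ⊓ (M.comap f).restrictScalars F) :=
      finrank_map_inf_add_finrank_inf_ker (f.restrictScalars F) U (M.restrictScalars F)
    have comap_bound := finrank_inf_le (M.comap f) finrank_comap
    lia

/-- Lemma 2.3 (3): if `U` is `(b,w)`-evasive in `X` and `A` is an `E`-subspace with
`dim_E A = a ≤ b` and `v = dim_F (U ∩ A)`, then `(U + A)/A` is `(b-a, w-v)`-evasive
in `X/A`. -/
theorem statement3 (F E : Type*) [Field F] [Field E] [Algebra F E]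
    [FiniteDimensional F E] (m : ℕ) (hm : Module.finrank F E = m)
    (X : Type*) [AddCommGroup X] [Module E X] [Module F X] [IsScalarTower F E X]
    [FiniteDimensional E X] (k : ℕ) (hX : Module.finrank E X = k)
    (b w : ℕ) (hb : b ≤ k) (U : Submodule F X) (hU : IsEvasive F E U b (w : ℤ))
    (A : Submodule E X) (a : ℕ) (ha : Module.finrank E A = a) (hab : a ≤ b)
    (v : ℕ) (hv : Module.finrank F ↥(U ⊓ A.restrictScalars F) = v) :
    IsEvasive F E (U.map ((A.mkQ).restrictScalars F)) (b - a) ((w : ℤ) - (v : ℤ)) := by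
  have : FiniteDimensional F X := FiniteDimensional.trans F E X
  have evasive_map_mkQ := statement3_general hU A.mkQ_surjective (by rwa [ker_mkQ, ha])
  rwa [ker_mkQ, ha, hv] at evasive_map_mkQ
end

section
/- For any real number a > (1+√5)/2 and any (m,n,h) ∈ ℕ³ with 1 ≤ h ≤ min{m,n}, it holds that a^{−h(m+n−h)} · (Σ_{i=0}^{h} δ_a(m,i)·bin_a(n,i)) < 1/((a−1)(a²−a−1)a^{m+n−2h−2}) + a²/(a²−a−1). -/
open Submodule Pointwise

/-- The `a`-binomial coefficient `bin_a(n, r)` (as a real number). -/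
noncomputable def qbin (a : ℝ) (n r : ℕ) : ℝ :=
  if r ≤ n then ∏ i ∈ Finset.Icc 1 r, (a ^ (i + n - r) - 1) / (a ^ i - 1) else 0

/-- `δ_a(n, r) = ∏_{i=0}^{r-1} (a^n - a^i)` (as a real number). -/
noncomputable def qdelta (a : ℝ) (n r : ℕ) : ℝ :=
  ∏ i ∈ Finset.range r, (a ^ n - a ^ i)

/-!
The product `∏ (1 - a⁻¹ ^ j)` always exceeds `1 - a⁻¹ - a⁻¹ ^ 2 = (a² - a - 1) / a²`, the beginning
of Euler's pentagonal series, which for `a > 1` is positive exactly when `a` exceeds the golden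
ratio. Hence `δ_a(m,i) bin_a(n,i)` is less than its leading power `a ^ (i (m + n - i))` times
`a² / (a² - a - 1)`. For `i < h ≤ (m + n) / 2` passing from `i` to `i + 1` raises the exponent by
`m + n - 2 i - 1 ≥ 1`, so the powers are dominated by the last one as in a geometric series.
-/

section OrderedRing

variable {R : Type*} [CommRing R] [LinearOrder R] [IsStrictOrderedRing R]

theorem one_sub_sub_sq_add_pow_le_prod_one_sub_pow {x : R} (hx0 : 0 ≤ x) (hx1 : x ≤ 1) (r : ℕ) :
    1 - x - x ^ 2 + x ^ (r + 1) ≤ ∏ j ∈ Finset.Icc 1 r, (1 - x ^ j) := by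
  induction r with
  | zero =>
    rw [Finset.Icc_eq_empty_of_lt one_pos, Finset.prod_empty, zero_add, pow_one]
    linarith [sq_nonneg x]
  | succ r ih =>
    rcases r.eq_zero_or_pos with rfl | hr
    · simp
    have hpow : x ^ (r + 1) ≤ x ^ 2 := pow_le_pow_of_le_one hx0 hx1 (by lia)
    calc 1 - x - x ^ 2 + x ^ (r + 1 + 1)
        ≤ 1 - x - x ^ 2 + x ^ (r + 1 + 1) + x ^ (r + 1) * (x ^ 2 - x ^ (r + 1)) :=
          le_add_of_nonneg_right (mul_nonneg (pow_nonneg hx0 _) (sub_nonneg.2 hpow))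
      _ = (1 - x - x ^ 2 + x ^ (r + 1)) * (1 - x ^ (r + 1)) := by ring
      _ ≤ (∏ j ∈ Finset.Icc 1 r, (1 - x ^ j)) * (1 - x ^ (r + 1)) :=
          mul_le_mul_of_nonneg_right ih (sub_nonneg.2 (pow_le_one₀ hx0 hx1))
      _ = ∏ j ∈ Finset.Icc 1 (r + 1), (1 - x ^ j) := (Finset.prod_Icc_succ_top (by lia) _).symm

theorem sum_pow_mul_tsub_mul_le_pow {a : R} (ha : 1 ≤ a) {h N : ℕ} (hN : 2 * h ≤ N) :
    (∑ i ∈ Finset.range h, a ^ (i * (N - i))) * ((a - 1) * a ^ (N - 2 * h)) ≤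
      a ^ (h * (N - h)) := by
  have ha0 : 0 ≤ a := zero_le_one.trans ha
  induction h with
  | zero => simp
  | succ h ih =>
    obtain ⟨d, rfl⟩ := Nat.exists_eq_add_of_le hN
    set S := ∑ i ∈ Finset.range h, a ^ (i * (2 * (h + 1) + d - i))
    set P := a ^ (h * (2 * (h + 1) + d - h)) with hP
    have hS : 0 ≤ S := Finset.sum_nonneg fun _ _ ↦ pow_nonneg ha0 _
    have ih : S * ((a - 1) * a ^ (d + 2)) ≤ P := by
      have := ih (by lia)
      rwa [show 2 * (h + 1) + d - 2 * h = d + 2 by lia] at this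
    have hSP : S * ((a - 1) * a ^ d) ≤ P * a ^ d :=
      calc S * ((a - 1) * a ^ d)
          ≤ S * ((a - 1) * a ^ (d + 2)) := by
            have : 0 ≤ a - 1 := sub_nonneg.2 ha
            gcongr
            exact d.le_add_right 2
        _ ≤ P := ih
        _ ≤ P * a ^ d := le_mul_of_one_le_right (pow_nonneg ha0 _) (one_le_pow₀ ha)
    calc (∑ i ∈ Finset.range (h + 1), a ^ (i * (2 * (h + 1) + d - i))) *
            ((a - 1) * a ^ (2 * (h + 1) + d - 2 * (h + 1)))
        = S * ((a - 1) * a ^ d) + P * ((a - 1) * a ^ d) := by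
          rw [Finset.sum_range_succ, add_mul, Nat.add_sub_cancel_left]
      _ ≤ P * a ^ d + P * ((a - 1) * a ^ d) := by gcongr
      _ = P * a ^ (d + 1) := by ring
      _ = a ^ ((h + 1) * (2 * (h + 1) + d - (h + 1))) := by
          rw [hP, ← pow_add, show 2 * (h + 1) + d - h = h + 2 + d by lia,
            show 2 * (h + 1) + d - (h + 1) = h + 1 + d by lia]
          ring

end OrderedRing

section OrderedField

variable {K : Type*} [Field K] [LinearOrder K] [IsStrictOrderedRing K] {a : K}

theorem pow_sub_one_div_pow_sub_one_nonneg (ha : 1 ≤ a) (k l : ℕ) :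
    0 ≤ (a ^ k - 1) / (a ^ l - 1) :=
  div_nonneg (sub_nonneg.2 (one_le_pow₀ ha)) (sub_nonneg.2 (one_le_pow₀ ha))

theorem prod_pow_div_pow_sub_one_lt (ha : 1 < a) (hq : 0 < a ^ 2 - a - 1) (r : ℕ) :
    ∏ j ∈ Finset.Icc 1 r, a ^ j / (a ^ j - 1) < a ^ 2 / (a ^ 2 - a - 1) := by
  have ha0 : 0 < a := zero_lt_one.trans ha
  have h_euler : (a ^ 2 - a - 1) / a ^ 2 < ∏ j ∈ Finset.Icc 1 r, (1 - a⁻¹ ^ j) :=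
    calc (a ^ 2 - a - 1) / a ^ 2
        = 1 - a⁻¹ - a⁻¹ ^ 2 := by field_simp
      _ < 1 - a⁻¹ - a⁻¹ ^ 2 + a⁻¹ ^ (r + 1) := lt_add_of_pos_right _ (by positivity)
      _ ≤ ∏ j ∈ Finset.Icc 1 r, (1 - a⁻¹ ^ j) :=
          one_sub_sub_sq_add_pow_le_prod_one_sub_pow (by positivity) (inv_le_one_of_one_le₀ ha.le) r
  calc ∏ j ∈ Finset.Icc 1 r, a ^ j / (a ^ j - 1)
      = (∏ j ∈ Finset.Icc 1 r, (1 - a⁻¹ ^ j))⁻¹ := by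
        rw [← Finset.prod_inv_distrib]
        refine Finset.prod_congr rfl fun j _ ↦ ?_
        rw [← inv_div, sub_div, div_self (pow_pos ha0 j).ne', one_div, inv_pow]
    _ < ((a ^ 2 - a - 1) / a ^ 2)⁻¹ := inv_strictAnti₀ (by positivity) h_euler
    _ = a ^ 2 / (a ^ 2 - a - 1) := inv_div _ _

end OrderedField

theorem sq_sub_self_sub_one_pos_of_goldenRatio_lt {a : ℝ} (ha : Real.goldenRatio < a) :
    0 < a ^ 2 - a - 1 := by
  nlinarith [Real.one_lt_goldenRatio, Real.goldenRatio_sq]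

section QAnalogue

variable {a : ℝ}

theorem qdelta_le_pow (ha : 1 ≤ a) (m r : ℕ) : qdelta a m r ≤ a ^ (m * r) := by
  have ha0 : 0 ≤ a := zero_le_one.trans ha
  rcases lt_or_ge m r with hmr | hrm
  · have hzero : qdelta a m r = 0 := Finset.prod_eq_zero (Finset.mem_range.2 hmr) (sub_self _)
    exact hzero.trans_le (pow_nonneg ha0 _)
  · calc ∏ i ∈ Finset.range r, (a ^ m - a ^ i)
        ≤ ∏ _i ∈ Finset.range r, a ^ m := by
          refine Finset.prod_le_prod (fun i hi ↦ ?_) fun i _ ↦ sub_le_self _ (pow_nonneg ha0 i)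
          exact sub_nonneg.2 (pow_le_pow_right₀ ha ((Finset.mem_range.1 hi).le.trans hrm))
      _ = a ^ (m * r) := by rw [Finset.prod_const, Finset.card_range, pow_mul]

theorem qbin_nonneg (ha : 1 ≤ a) (n r : ℕ) : 0 ≤ qbin a n r := by
  unfold qbin
  split_ifs
  · exact Finset.prod_nonneg fun j _ ↦ pow_sub_one_div_pow_sub_one_nonneg ha _ j
  · exact le_rfl

theorem qbin_lt_mul_pow (ha : 1 < a) (hq : 0 < a ^ 2 - a - 1) (n r : ℕ) :
    qbin a n r < a ^ 2 / (a ^ 2 - a - 1) * a ^ (r * (n - r)) := by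
  unfold qbin
  split_ifs with hrn
  · have h_factor (j : ℕ) :
        (a ^ (j + n - r) - 1) / (a ^ j - 1) ≤ a ^ j / (a ^ j - 1) * a ^ (n - r) := by
      rw [div_mul_eq_mul_div, ← pow_add, ← Nat.add_sub_assoc hrn]
      exact div_le_div_of_nonneg_right (sub_le_self _ zero_le_one)
        (sub_nonneg.2 (one_le_pow₀ ha.le))
    calc ∏ j ∈ Finset.Icc 1 r, (a ^ (j + n - r) - 1) / (a ^ j - 1)
        ≤ ∏ j ∈ Finset.Icc 1 r, a ^ j / (a ^ j - 1) * a ^ (n - r) :=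
          Finset.prod_le_prod (fun j _ ↦ pow_sub_one_div_pow_sub_one_nonneg ha.le _ j)
            fun j _ ↦ h_factor j
      _ = (∏ j ∈ Finset.Icc 1 r, a ^ j / (a ^ j - 1)) * a ^ (r * (n - r)) := by
          rw [Finset.prod_mul_distrib, Finset.prod_const, Nat.card_Icc, Nat.add_sub_cancel,
            ← pow_mul, mul_comm r]
      _ < a ^ 2 / (a ^ 2 - a - 1) * a ^ (r * (n - r)) :=
          mul_lt_mul_of_pos_right (prod_pow_div_pow_sub_one_lt ha hq r) (by positivity)
  · positivity

theorem qdelta_mul_qbin_lt (ha : 1 < a) (hq : 0 < a ^ 2 - a - 1) (m n i : ℕ) :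
    qdelta a m i * qbin a n i < a ^ 2 / (a ^ 2 - a - 1) * a ^ (i * (m + n - i)) := by
  rcases lt_or_ge n i with hni | hin
  · have hzero : qbin a n i = 0 := if_neg hni.not_ge
    rw [hzero, mul_zero]
    positivity
  · calc qdelta a m i * qbin a n i
        ≤ a ^ (m * i) * qbin a n i :=
          mul_le_mul_of_nonneg_right (qdelta_le_pow ha.le m i) (qbin_nonneg ha.le n i)
      _ < a ^ (m * i) * (a ^ 2 / (a ^ 2 - a - 1) * a ^ (i * (n - i))) :=
          mul_lt_mul_of_pos_left (qbin_lt_mul_pow ha hq n i) (by positivity)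
      _ = a ^ 2 / (a ^ 2 - a - 1) * a ^ (i * (m + n - i)) := by
          rw [Nat.add_sub_assoc hin]
          ring

theorem sum_qdelta_mul_qbin_lt (ha : 1 < a) (hq : 0 < a ^ 2 - a - 1) {m n h : ℕ}
    (hmn : 2 * h ≤ m + n) :
    ∑ i ∈ Finset.range (h + 1), qdelta a m i * qbin a n i <
      a ^ (h * (m + n - h)) *
        (a ^ 2 / (a ^ 2 - a - 1) * (1 / ((a - 1) * a ^ (m + n - 2 * h)) + 1)) := by
  have : 0 < a - 1 := sub_pos.2 ha
  have h_geom : ∑ i ∈ Finset.range h, a ^ (i * (m + n - i)) ≤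
      a ^ (h * (m + n - h)) / ((a - 1) * a ^ (m + n - 2 * h)) :=
    (le_div_iff₀ (by positivity)).2 (sum_pow_mul_tsub_mul_le_pow ha.le hmn)
  calc ∑ i ∈ Finset.range (h + 1), qdelta a m i * qbin a n i
      < ∑ i ∈ Finset.range (h + 1), a ^ 2 / (a ^ 2 - a - 1) * a ^ (i * (m + n - i)) :=
        Finset.sum_lt_sum_of_nonempty Finset.nonempty_range_add_one
          fun i _ ↦ qdelta_mul_qbin_lt ha hq m n i
    _ = a ^ 2 / (a ^ 2 - a - 1) *
          (∑ i ∈ Finset.range h, a ^ (i * (m + n - i)) + a ^ (h * (m + n - h))) := by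
        rw [← Finset.mul_sum, Finset.sum_range_succ]
    _ ≤ a ^ 2 / (a ^ 2 - a - 1) * (a ^ (h * (m + n - h)) / ((a - 1) * a ^ (m + n - 2 * h)) +
          a ^ (h * (m + n - h))) := by gcongr
    _ = a ^ (h * (m + n - h)) *
          (a ^ 2 / (a ^ 2 - a - 1) * (1 / ((a - 1) * a ^ (m + n - 2 * h)) + 1)) := by ring

end QAnalogue

theorem statement4_general {a : ℝ} (ha : Real.goldenRatio < a) {m n h : ℕ}
    (hmn : 2 * h ≤ m + n) :
    a ^ (-((h * (m + n - h) : ℕ) : ℤ)) * (∑ i ∈ Finset.range (h + 1), qdelta a m i * qbin a n i) <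
      1 / ((a - 1) * (a ^ 2 - a - 1) * a ^ ((m : ℤ) + (n : ℤ) - 2 * (h : ℤ) - 2)) +
        a ^ 2 / (a ^ 2 - a - 1) := by
  have ha1 : 1 < a := Real.one_lt_goldenRatio.trans ha
  have ha0 : 0 < a := zero_lt_one.trans ha1
  have hq : 0 < a ^ 2 - a - 1 := sq_sub_self_sub_one_pos_of_goldenRatio_lt ha
  have h_exponent : (m : ℤ) + n - 2 * h - 2 = ((m + n - 2 * h : ℕ) : ℤ) - (2 : ℕ) := by lia
  have h_rhs : 1 / ((a - 1) * (a ^ 2 - a - 1) * a ^ ((m : ℤ) + n - 2 * h - 2)) +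
      a ^ 2 / (a ^ 2 - a - 1) =
        a ^ 2 / (a ^ 2 - a - 1) * (1 / ((a - 1) * a ^ (m + n - 2 * h)) + 1) := by
    rw [h_exponent, zpow_sub₀ ha0.ne', zpow_natCast, zpow_natCast, mul_add, mul_one,
      div_mul_div_comm, mul_one, ← mul_div_assoc, one_div_div]
    ring
  rw [h_rhs, zpow_neg, zpow_natCast, inv_mul_lt_iff₀ (pow_pos ha0 _)]
  exact sum_qdelta_mul_qbin_lt ha1 hq hmn

/-- Proposition 2.2 (2): for `a > (1+√5)/2` and `1 ≤ h ≤ min{m,n}`,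
`a^{-h(m+n-h)} Σ_{i=0}^h δ_a(m,i) bin_a(n,i)
  < 1/((a-1)(a²-a-1)a^{m+n-2h-2}) + a²/(a²-a-1)`. -/
theorem statement4 (a : ℝ) (ha : (1 + Real.sqrt 5) / 2 < a)
    (m n h : ℕ) (h1 : 1 ≤ h) (hm : h ≤ m) (hn : h ≤ n) :
    a ^ (-((h * (m + n - h) : ℕ) : ℤ)) * (∑ i ∈ Finset.range (h + 1), qdelta a m i * qbin a n i) <
      1 / ((a - 1) * (a ^ 2 - a - 1) * a ^ ((m : ℤ) + (n : ℤ) - 2 * (h : ℤ) - 2)) +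
        a ^ 2 / (a ^ 2 - a - 1) :=
  statement4_general ha (by lia)
end

section
/- Let Y be a k-dimensional E-vector space and t ∈ {0,1,…,k}. Then: (i) for any F-subspace A of Y with dim_F(A) ≤ mt, there exists an E-subspace V of Y with dim_E(V) = k−t and A ∩ V = {0}; (ii) for any F-subspace B of Y with dim_F(B) ≥ mt, there exists an E-subspace W of Y with dim_E(W) = k−t and B + W = Y. -/
open Submodule Pointwise

/-!
The heart of the matter is that an `F`-subspace `A` with `dim_F A + m ≤ dim_F Y` misses, up to `0`,
some line `E y`. If `F` is finite, then otherwise `E × A → Y`, `(e, a) ↦ e a` would be onto, which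
is impossible by counting since `E × 0` and `0 × A` are collapsed to `0`. If `F` is infinite, choose
`y` such that the kernel of `φ_y : E → Y / A`, `e ↦ e y`, has least dimension. A first-order
perturbation `φ_{y + s z} = φ_y + s φ_z` cannot shrink the kernel, so `φ_z` maps `ker φ_y` into
`range φ_y` for every `z`. A nonzero `e` in the kernel has `e Y = Y`, hence `φ_y` is onto, and by
dimensions it is injective after all.

Part (i) follows by adjoining such lines one at a time in successive quotients `Y / V`. For part
(ii), a `W` that avoids an `mt`-dimensional subspace of `B` is complementary to it.
-/

open Module

section Perturbation

variable {F U W : Type*} [Field F] [AddCommGroup U] [Module F U] [FiniteDimensional F U]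
  [AddCommGroup W] [Module F W]

theorem finite_setOf_not_injective_add_smul {G : U →ₗ[F] W} (hG : Function.Injective G)
    (H : U →ₗ[F] W) : {s : F | ¬ Function.Injective (G + s • H)}.Finite := by
  obtain ⟨P, hPG⟩ := G.exists_leftInverse_of_injective (LinearMap.ker_eq_bot.2 hG)
  refine ((End.finite_hasEigenvalue (-(P ∘ₗ H))).image (·⁻¹)).subset fun s hs ↦ ?_
  obtain ⟨x, hx, hx0⟩ : ∃ x, (G + s • H) x = 0 ∧ x ≠ 0 := by
    simpa [injective_iff_map_eq_zero] using hs
  have hPx : x + s • P (H x) = 0 := by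
    simpa [show P (G x) = x from LinearMap.congr_fun hPG x] using congrArg P hx
  have hs0 : s ≠ 0 := by
    rintro rfl
    exact hx0 (by simpa using hPx)
  have hsx : (-(P ∘ₗ H)) x = s⁻¹ • x := by
    rw [eq_inv_smul_iff₀ hs0, LinearMap.neg_apply, smul_neg, LinearMap.comp_apply]
    exact (eq_neg_of_add_eq_zero_left hPx).symm
  exact ⟨s⁻¹, End.hasEigenvalue_of_hasEigenvector
    (End.hasEigenvector_iff.2 ⟨End.mem_eigenspace_iff.2 hsx, hx0⟩), inv_inv s⟩

theorem exists_finrank_range_lt_finrank_range_add_smul [Infinite F] {T S : U →ₗ[F] W} {u : U}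
    (hu : T u = 0) (hSu : S u ∉ LinearMap.range T) :
    ∃ s : F, finrank F (LinearMap.range T) < finrank F (LinearMap.range (T + s • S)) := by
  obtain ⟨j, hj⟩ := T.rangeRestrict.exists_rightInverse_of_surjective T.range_rangeRestrict
  have hTj (w : LinearMap.range T) : T (j w) = w :=
    congrArg Subtype.val (LinearMap.congr_fun hj w)
  -- As `S u = (T + s • S) (s⁻¹ • u)`, the range of `G + s • H` lies in that of `T + s • S`.
  let G := (LinearMap.range T).subtype.coprod (LinearMap.toSpanSingleton F W (S u))
  let H := (S ∘ₗ j).coprod (0 : F →ₗ[F] W)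
  have hG : Function.Injective G := by
    rw [← LinearMap.ker_eq_bot, LinearMap.ker_coprod_of_disjoint_range, ker_subtype,
      LinearMap.ker_toSpanSingleton, prod_bot]
    · intro h
      exact hSu (h ▸ zero_mem _)
    · rw [range_subtype, LinearMap.range_toSpanSingleton]
      exact disjoint_span_singleton_of_notMem hSu
  obtain ⟨s, hs⟩ := ((finite_setOf_not_injective_add_smul hG H).insert 0).exists_notMem
  obtain ⟨hs0, hinj⟩ : s ≠ 0 ∧ Function.Injective (G + s • H) := by simpa using hs
  have hle : LinearMap.range (G + s • H) ≤ LinearMap.range (T + s • S) := by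
    rintro _ ⟨⟨w, c⟩, rfl⟩
    refine ⟨j w + (c * s⁻¹) • u, ?_⟩
    simp only [G, H, LinearMap.add_apply, LinearMap.smul_apply, LinearMap.coprod_apply,
      LinearMap.comp_apply, LinearMap.toSpanSingleton_apply, LinearMap.zero_apply, subtype_apply,
      map_add, map_smul, hTj, hu, smul_zero, add_zero, smul_add, smul_smul,
      inv_mul_cancel_right₀ hs0]
    abel
  refine ⟨s, ?_⟩
  calc finrank F (LinearMap.range T)
      < finrank F (LinearMap.range T × F) := by simp
    _ = finrank F (LinearMap.range (G + s • H)) := (LinearMap.finrank_range_of_inj hinj).symm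
    _ ≤ finrank F (LinearMap.range (T + s • S)) := finrank_mono hle

theorem map_ker_le_range_of_forall_finrank_ker_le [Infinite F] {T S : U →ₗ[F] W}
    (h : ∀ s : F, finrank F (LinearMap.ker T) ≤ finrank F (LinearMap.ker (T + s • S))) :
    (LinearMap.ker T).map S ≤ LinearMap.range T := by
  rintro _ ⟨u, hu, rfl⟩
  by_contra hSu
  obtain ⟨s, hs⟩ := exists_finrank_range_lt_finrank_range_add_smul hu hSu
  have hT := T.finrank_range_add_finrank_ker
  have hTS := (T + s • S).finrank_range_add_finrank_ker
  have := h s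
  lia

end Perturbation

theorem exists_submodule_le_finrank_eq {K V : Type*} [Ring K] [StrongRankCondition K]
    [AddCommGroup V] [Module K V] (B : Submodule K V) {n : ℕ} (hn : n ≤ finrank K B) :
    ∃ A ≤ B, finrank K A = n := by
  have : Nontrivial K := nontrivial_of_invariantBasisNumber K
  obtain ⟨v, hv⟩ := exists_linearIndependent_of_le_finrank hn
  refine ⟨(span K (Set.range v)).map B.subtype, map_subtype_le _ _, ?_⟩
  rw [finrank_map_subtype_eq, finrank_span_eq_card hv, Fintype.card_fin]

theorem disjoint_restrictScalars_sup_span_singleton {F E Y : Type*} [Ring F] [Ring E]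
    [Module F E] [AddCommGroup Y] [Module E Y] [Module F Y] [IsScalarTower F E Y]
    {A : Submodule F Y} {V : Submodule E Y} {y : Y}
    (hAV : Disjoint A (V.restrictScalars F))
    (hy : ∀ e : E, e • V.mkQ y ∈ A.map (V.mkQ.restrictScalars F) → e = 0) :
    Disjoint A ((V ⊔ span E {y}).restrictScalars F) := by
  refine disjoint_def.2 fun x hxA hx ↦ ?_
  obtain ⟨v, hv, e, rfl⟩ : ∃ v ∈ V, ∃ e : E, v + e • y = x := by
    simpa [mem_sup, mem_span_singleton] using hx
  have he : e = 0 := hy e ⟨v + e • y, hxA, by simp [hv]⟩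
  subst he
  exact disjoint_def.1 hAV _ hxA (by simpa using hv)

theorem exists_forall_smul_mem_imp_eq_zero_of_finite {F : Type*} (E : Type*) {Y : Type*}
    [Field F] [Finite F] [DivisionRing E] [Module F E] [FiniteDimensional F E]
    [AddCommGroup Y] [Module E Y] [Module F Y] [FiniteDimensional F Y] (A : Submodule F Y)
    (hA : finrank F A + finrank F E ≤ finrank F Y) :
    ∃ y : Y, ∀ e : E, e • y ∈ A → e = 0 := by
  by_contra! h
  have : Finite E := Module.finite_of_finite F
  have : Finite Y := Module.finite_of_finite F
  let f : E × A → Y := fun p ↦ p.1 • (p.2 : Y)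
  have hf : Function.Surjective f := fun y ↦ by
    obtain ⟨e, hey, he⟩ := h y
    exact ⟨(e⁻¹, ⟨e • y, hey⟩), inv_smul_smul₀ he y⟩
  have hcard : Nat.card (E × A) ≤ Nat.card Y := by
    rw [Nat.card_prod, natCard_eq_pow_finrank (K := F) (V := E),
      natCard_eq_pow_finrank (K := F) (V := A), natCard_eq_pow_finrank (K := F) (V := Y),
      ← pow_add, add_comm]
    exact Nat.pow_le_pow_right Nat.card_pos hA
  have hcollapse : f (1, 0) = f (0, 0) := by simp [f]
  exact one_ne_zero (congrArg Prod.fst ((hf.bijective_of_nat_card_le hcard).injective hcollapse))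

section ScalarExtension

variable {F : Type*} (E : Type*) {Y : Type*} [Field F] [DivisionRing E] [Algebra F E]
  [AddCommGroup Y] [Module E Y] [Module F Y] [IsScalarTower F E Y]

theorem exists_forall_smul_mem_imp_eq_zero_of_infinite [Infinite F] [FiniteDimensional F E]
    [FiniteDimensional F Y] (A : Submodule F Y)
    (hA : finrank F A + finrank F E ≤ finrank F Y) :
    ∃ y : Y, ∀ e : E, e • y ∈ A → e = 0 := by
  let φ (y : Y) : E →ₗ[F] Y ⧸ A := A.mkQ ∘ₗ (LinearMap.toSpanSingleton E Y y).restrictScalars F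
  have hφ_add (y z : Y) (s : F) : φ (y + s • z) = φ y + s • φ z := by
    ext e
    simp [φ, smul_comm e s z]
  let y := Function.argmin fun y ↦ finrank F (LinearMap.ker (φ y))
  have hy (z : Y) : (LinearMap.ker (φ y)).map (φ z) ≤ LinearMap.range (φ y) :=
    map_ker_le_range_of_forall_finrank_ker_le fun s ↦
      hφ_add y z s ▸ Function.argmin_le (fun y ↦ finrank F (LinearMap.ker (φ y))) (y + s • z)
  refine ⟨y, fun e he ↦ ?_⟩
  have hφe : φ y e = 0 := (Submodule.Quotient.mk_eq_zero A).2 he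
  by_contra he0
  have hsurj : Function.Surjective (φ y) := fun q ↦ by
    obtain ⟨w, rfl⟩ := A.mkQ_surjective q
    simpa [φ, smul_inv_smul₀ he0] using hy (e⁻¹ • w) (mem_map_of_mem hφe)
  have hdim : finrank F E = finrank F (Y ⧸ A) := by
    have := A.finrank_quotient_add_finrank
    have := LinearMap.finrank_le_finrank_of_surjective hsurj
    lia
  have hinj := (LinearMap.injective_iff_surjective_of_finrank_eq_finrank hdim).2 hsurj
  exact he0 ((map_eq_zero_iff (φ y) hinj).1 hφe)

theorem exists_forall_smul_mem_imp_eq_zero [FiniteDimensional F E] [FiniteDimensional F Y]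
    (A : Submodule F Y) (hA : finrank F A + finrank F E ≤ finrank F Y) :
    ∃ y : Y, ∀ e : E, e • y ∈ A → e = 0 := by
  cases finite_or_infinite F
  · exact exists_forall_smul_mem_imp_eq_zero_of_finite E A hA
  · exact exists_forall_smul_mem_imp_eq_zero_of_infinite E A hA

theorem exists_finrank_eq_and_disjoint [FiniteDimensional F E] [FiniteDimensional F Y]
    (A : Submodule F Y) (s : ℕ) (hA : finrank F A + finrank F E * s ≤ finrank F Y) :
    ∃ V : Submodule E Y, finrank E V = s ∧ Disjoint A (V.restrictScalars F) := by
  have : FiniteDimensional E Y := Module.Finite.of_restrictScalars_finite F E Y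
  induction s with
  | zero => exact ⟨⊥, finrank_bot E Y, by simp⟩
  | succ s ih =>
    obtain ⟨V, hV, hAV⟩ := ih (by lia)
    have hquot : finrank F (A.map (V.mkQ.restrictScalars F)) + finrank F E
        ≤ finrank F (Y ⧸ V) := by
      have hmap := finrank_map_le (V.mkQ.restrictScalars F) A
      have hsub := (V.restrictScalars F).finrank_quotient_add_finrank
      have hVF : finrank F E * s = finrank F (V.restrictScalars F) :=
        hV ▸ finrank_mul_finrank F E V
      have : finrank F (Y ⧸ V.restrictScalars F) = finrank F (Y ⧸ V) := rfl
      lia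
    obtain ⟨q, hq⟩ := exists_forall_smul_mem_imp_eq_zero E _ hquot
    obtain ⟨y, rfl⟩ := V.mkQ_surjective q
    have hyV : y ∉ V := fun hy ↦
      one_ne_zero (hq 1 ⟨0, A.zero_mem, by simp [(Submodule.Quotient.mk_eq_zero V).2 hy]⟩)
    exact ⟨V ⊔ span E {y}, by rw [finrank_sup_span_singleton hyV, hV],
      disjoint_restrictScalars_sup_span_singleton hAV hq⟩

theorem exists_finrank_eq_and_codisjoint [FiniteDimensional F E] [FiniteDimensional F Y]
    (B : Submodule F Y) (s : ℕ) (hs : s ≤ finrank E Y)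
    (hB : finrank F Y ≤ finrank F B + finrank F E * s) :
    ∃ W : Submodule E Y, finrank E W = s ∧ Codisjoint B (W.restrictScalars F) := by
  have : FiniteDimensional E Y := Module.Finite.of_restrictScalars_finite F E Y
  have hmul : finrank F E * s ≤ finrank F Y :=
    finrank_mul_finrank F E Y ▸ Nat.mul_le_mul_left _ hs
  obtain ⟨A, hAB, hA⟩ :=
    exists_submodule_le_finrank_eq B (n := finrank F Y - finrank F E * s) (by lia)
  obtain ⟨W, hW, hAW⟩ := exists_finrank_eq_and_disjoint E A s (by lia)
  have hWF : finrank F E * s = finrank F (W.restrictScalars F) := hW ▸ finrank_mul_finrank F E W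
  have hAW_top : A ⊔ W.restrictScalars F = ⊤ := eq_top_of_disjoint _ _ (by lia) hAW
  exact ⟨W, hW, (codisjoint_iff.2 hAW_top).mono_left hAB⟩

end ScalarExtension

theorem statement5_general (F E : Type*) [Field F] [DivisionRing E] [Algebra F E]
    [FiniteDimensional F E] (m : ℕ) (hm : Module.finrank F E = m)
    (Y : Type*) [AddCommGroup Y] [Module E Y] [Module F Y] [IsScalarTower F E Y]
    [FiniteDimensional E Y] (k : ℕ) (hY : Module.finrank E Y = k)
    (t : ℕ) (ht : t ≤ k) :
    (∀ A : Submodule F Y, Module.finrank F A ≤ m * t →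
      ∃ V : Submodule E Y, Module.finrank E V = k - t ∧
        (A : Set Y) ∩ (V : Set Y) = {0}) ∧
    (∀ B : Submodule F Y, m * t ≤ Module.finrank F B →
      ∃ W : Submodule E Y, Module.finrank E W = k - t ∧
        (B : Set Y) + (W : Set Y) = Set.univ) := by
  subst hm hY
  have : FiniteDimensional F Y := FiniteDimensional.trans F E Y
  have hdim : finrank F E * t + finrank F E * (finrank E Y - t) = finrank F Y := by
    rw [← mul_add, Nat.add_sub_cancel' ht, finrank_mul_finrank]
  refine ⟨fun A hA ↦ ?_, fun B hB ↦ ?_⟩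
  · obtain ⟨V, hV, hAV⟩ := exists_finrank_eq_and_disjoint E A (finrank E Y - t) (by lia)
    exact ⟨V, hV, congrArg SetLike.coe hAV.eq_bot⟩
  · obtain ⟨W, hW, hBW⟩ :=
      exists_finrank_eq_and_codisjoint E B (finrank E Y - t) (Nat.sub_le _ _) (by lia)
    refine ⟨W, hW, ?_⟩
    simpa only [coe_sup, coe_restrictScalars, top_coe] using congrArg SetLike.coe hBW.eq_top

/-- Theorem 4.1 (1): in a `k`-dimensional `E`-vector space `Y`, for `t ≤ k`:
(i) every `F`-subspace `A` with `dim_F A ≤ mt` avoids some `E`-subspace `V` of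
dimension `k - t`; (ii) every `F`-subspace `B` with `dim_F B ≥ mt` is complemented by
some `E`-subspace `W` of dimension `k - t`, i.e. `B + W = Y`. -/
theorem statement5 (F E : Type*) [Field F] [Field E] [Algebra F E]
    [FiniteDimensional F E] (m : ℕ) (hm : Module.finrank F E = m)
    (Y : Type*) [AddCommGroup Y] [Module E Y] [Module F Y] [IsScalarTower F E Y]
    [FiniteDimensional E Y] (k : ℕ) (hY : Module.finrank E Y = k)
    (t : ℕ) (ht : t ≤ k) :
    (∀ A : Submodule F Y, Module.finrank F A ≤ m * t →
      ∃ V : Submodule E Y, Module.finrank E V = k - t ∧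
        (A : Set Y) ∩ (V : Set Y) = {0}) ∧
    (∀ B : Submodule F Y, m * t ≤ Module.finrank F B →
      ∃ W : Submodule E Y, Module.finrank E W = k - t ∧
        (B : Set Y) + (W : Set Y) = Set.univ) :=
  statement5_general F E m hm Y k hY t ht
end

section
/- Let (n,k) ∈ ℕ² with n ≥ k ≥ 1, let C be an [n,k] rank metric code, and let s ∈ {0,1,…,k}. Then max{wt(D) : D an E-subspace of C with dim_E(D) = s} = min{ms, wt(C)}. -/
open Submodule Pointwise

/-! Fix a nonzero `F`-linear form `φ : E → F`. The form `(a, b) ↦ φ (a * b)` is nondegenerate, and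
expanding coordinates in a dual basis shows that the rank support of a code `D` is the image of `D`
under `φ` applied coordinatewise. So `wt(D)` is the dimension of the image of `D` under a fixed
`F`-linear map, and the claim becomes one about general position: in an `E`-space `V`, every
`F`-subspace `K` admits `E`-subspaces of each dimension that either meet `K` trivially or span `V`
together with `K`.

Adding one `E`-line at a time, this reduces to finding a line `E ∙ v` that meets `K` trivially when
`K` has codimension at least `m`. If `F` is finite and no such line exists, then `(a, x) ↦ a • x` is
a surjection `E × K → V`; as `|E| |K| ≤ |V|` it is injective, yet it sends both `(0, 0)` and `(1,
0)` to `0`. If `F` is infinite, choose `v` so that `a ↦ a • v mod K` has maximal rank in the linear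
family of such maps. A map `f` of maximal rank forces every `g` in the family to send `ker f` into
`range f`; a nonzero `a` in the kernel would then make `f` surjective, as the vectors `a • (a⁻¹ •
w)` exhaust `V`, and so injective because `dim E ≤ dim (V / K)`. -/

section LinearAlgebra

variable {F V W : Type*} [Field F] [AddCommGroup V] [Module F V] [AddCommGroup W] [Module F W]

theorem finrank_map_eq_iff_disjoint_ker (f : V →ₗ[F] W) (p : Submodule F V)
    [FiniteDimensional F p] :
    Module.finrank F (p.map f) = Module.finrank F p ↔ Disjoint p (LinearMap.ker f) := by
  have hrank := (f.domRestrict p).finrank_range_add_finrank_ker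
  rw [LinearMap.range_domRestrict] at hrank
  rw [← LinearMap.injective_domRestrict_iff, ← LinearMap.ker_eq_bot, ← Submodule.finrank_eq_zero]
  omega

theorem exists_submodule_le_finrank_eq_s6 (p : Submodule F V) {r : ℕ} (hr : r ≤ Module.finrank F p) :
    ∃ q ≤ p, Module.finrank F q = r := by
  obtain ⟨b, hb⟩ := exists_linearIndependent_of_le_finrank hr
  refine ⟨(span F (Set.range b)).map p.subtype, Submodule.map_subtype_le _ _, ?_⟩
  rw [Submodule.finrank_map_subtype_eq, finrank_span_eq_card hb, Fintype.card_fin]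

theorem exists_finrank_range_le_finrank_range_sub_smul [Infinite F] [FiniteDimensional F V]
    (f g : V →ₗ[F] W) :
    ∃ μ : F, Module.finrank F (LinearMap.range f) ≤
      Module.finrank F (LinearMap.range (g - μ • f)) := by
  obtain ⟨σ, hσ⟩ := f.rangeRestrict.exists_rightInverse_of_surjective f.range_rangeRestrict
  obtain ⟨p, hp⟩ := (LinearMap.range f).subtype.exists_leftInverse_of_injective
    (LinearMap.range f).ker_subtype
  have hpfσ : p ∘ₗ f ∘ₗ σ = LinearMap.id := by
    have hfσ : f ∘ₗ σ = (LinearMap.range f).subtype :=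
      congrArg ((LinearMap.range f).subtype ∘ₗ ·) hσ
    rw [hfσ, hp]
  let N : Module.End F (LinearMap.range f) := p ∘ₗ g ∘ₗ σ
  obtain ⟨μ, hμ⟩ := N.finite_hasEigenvalue.infinite_compl.nonempty
  have hN : p ∘ₗ (g - μ • f) ∘ₗ σ = N - μ • 1 := by
    rw [LinearMap.sub_comp, LinearMap.comp_sub, LinearMap.smul_comp, LinearMap.comp_smul, hpfσ]
    rfl
  have hinj : Function.Injective (p ∘ₗ (g - μ • f) ∘ₗ σ) := by
    rw [hN, ← LinearMap.ker_eq_bot, ← Module.End.eigenspace_def]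
    exact not_not.1 fun h => hμ (Module.End.hasEigenvalue_iff.2 h)
  have hinj' : Function.Injective ((g - μ • f) ∘ₗ σ) :=
    Function.Injective.of_comp (f := p) hinj
  refine ⟨μ, ?_⟩
  rw [← LinearMap.finrank_range_of_inj hinj']
  exact Submodule.finrank_mono (LinearMap.range_comp_le_range σ _)

theorem apply_mem_range_of_forall_finrank_range_sub_smul_le [Infinite F] [FiniteDimensional F V]
    {f g : V →ₗ[F] W}
    (hmax : ∀ μ : F, Module.finrank F (LinearMap.range (g - μ • f)) ≤
      Module.finrank F (LinearMap.range f))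
    {x : V} (hx : f x = 0) : g x ∈ LinearMap.range f := by
  by_contra hgx
  let π := (span F {g x}).mkQ
  have hf : Disjoint (LinearMap.range f) (LinearMap.ker π) := by
    rw [Submodule.ker_mkQ, Submodule.disjoint_span_singleton]
    exact fun h => absurd h hgx
  obtain ⟨μ, hμ⟩ := exists_finrank_range_le_finrank_range_sub_smul (π ∘ₗ f) (π ∘ₗ g)
  rw [← LinearMap.comp_smul, ← LinearMap.comp_sub, LinearMap.range_comp, LinearMap.range_comp,
    (finrank_map_eq_iff_disjoint_ker π _).2 hf] at hμ
  have hsub : Disjoint (LinearMap.range (g - μ • f)) (LinearMap.ker π) :=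
    (finrank_map_eq_iff_disjoint_ker π _).1
      ((Submodule.finrank_map_le _ _).antisymm ((hmax μ).trans hμ))
  have hgx0 : g x = 0 := Submodule.disjoint_def.1 hsub (g x) ⟨x, by simp [hx]⟩ (by simp [π])
  exact hgx (hgx0 ▸ zero_mem _)

end LinearAlgebra

theorem exists_forall_smul_mem_imp_eq_zero_of_card_mul_card_le {E V : Type*} [DivisionRing E]
    [Finite E] [AddCommGroup V] [Module E V] (K : AddSubgroup V) [Finite K]
    (hcard : Nat.card E * Nat.card K ≤ Nat.card V) :
    ∃ v : V, ∀ a : E, a • v ∈ K → a = 0 := by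
  by_contra! hK
  let T : E × K → V := fun p => p.1 • (p.2 : V)
  have hT_surj : Function.Surjective T := fun v => by
    obtain ⟨a, hav, ha⟩ := hK v
    exact ⟨(a⁻¹, ⟨a • v, hav⟩), inv_smul_smul₀ ha v⟩
  have hT_inj := (hT_surj.bijective_of_nat_card_le (by rwa [Nat.card_prod])).injective
  have h01 : ((0 : E), (0 : K)) = (1, 0) := hT_inj (by simp [T])
  exact zero_ne_one (congrArg Prod.fst h01)

section GeneralPosition

variable {F E V : Type*} [Field F] [Field E] [Algebra F E] [AddCommGroup V] [Module E V]
  [Module F V] [IsScalarTower F E V]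

theorem finrank_restrictScalars (D : Submodule E V) :
    Module.finrank F (D.restrictScalars F) = Module.finrank F E * Module.finrank E D :=
  (Module.finrank_mul_finrank F E D).symm

variable (E) in
/-- The linear family of maps `a ↦ a • v mod K`, indexed by `v`. The map at `v` is injective
exactly when `v ≠ 0` and the line `E ∙ v` meets `K` trivially. -/
def smulMod (K : Submodule F V) : V →ₗ[F] E →ₗ[F] V ⧸ K :=
  (Algebra.lsmul F F V).toLinearMap.flip.compr₂ K.mkQ

theorem smulMod_apply (K : Submodule F V) (v : V) (a : E) : smulMod E K v a = K.mkQ (a • v) :=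
  rfl

variable [FiniteDimensional F E]

theorem exists_forall_finrank_range_smulMod_le (K : Submodule F V) :
    ∃ v : V, ∀ u : V, Module.finrank F (LinearMap.range (smulMod E K u)) ≤
      Module.finrank F (LinearMap.range (smulMod E K v)) := by
  have hbdd : BddAbove (Set.range fun u => Module.finrank F (LinearMap.range (smulMod E K u))) :=
    ⟨Module.finrank F E, Set.forall_mem_range.2 fun u => LinearMap.finrank_range_le _⟩
  obtain ⟨_, ⟨v, rfl⟩, hv⟩ := hbdd.exists_isGreatest_of_nonempty (Set.range_nonempty _)
  exact ⟨v, fun u => hv ⟨u, rfl⟩⟩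

theorem injective_smulMod_of_forall_finrank_range_le [Infinite F] {K : Submodule F V}
    (hK : Module.finrank F E ≤ Module.finrank F (V ⧸ K)) {v : V}
    (hv : ∀ u : V, Module.finrank F (LinearMap.range (smulMod E K u)) ≤
      Module.finrank F (LinearMap.range (smulMod E K v))) :
    Function.Injective (smulMod E K v) := by
  by_contra hinj
  obtain ⟨a, hav, ha⟩ : ∃ a : E, smulMod E K v a = 0 ∧ a ≠ 0 := by
    simpa [injective_iff_map_eq_zero] using hinj
  have hsurj : Function.Surjective (smulMod E K v) := fun y => by
    obtain ⟨w, rfl⟩ := K.mkQ_surjective y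
    have hmem : smulMod E K (a⁻¹ • w) a ∈ LinearMap.range (smulMod E K v) :=
      apply_mem_range_of_forall_finrank_range_sub_smul_le
        (fun μ => by rw [← map_smul, ← map_sub]; exact hv _) hav
    rwa [smulMod_apply, smul_inv_smul₀ ha] at hmem
  have hdim : Module.finrank F E = Module.finrank F (V ⧸ K) :=
    hK.antisymm (LinearMap.finrank_le_finrank_of_surjective hsurj)
  have : FiniteDimensional F (V ⧸ K) := Module.Finite.of_surjective _ hsurj
  exact hinj ((LinearMap.injective_iff_surjective_of_finrank_eq_finrank hdim).2 hsurj)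

variable [FiniteDimensional F V]

theorem exists_ne_zero_disjoint_span_singleton (K : Submodule F V)
    (hK : Module.finrank F K + Module.finrank F E ≤ Module.finrank F V) :
    ∃ v : V, v ≠ 0 ∧ Disjoint K ((span E {v}).restrictScalars F) := by
  obtain ⟨v, hv⟩ : ∃ v : V, ∀ a : E, a • v ∈ K → a = 0 := by
    rcases finite_or_infinite F with hF | hF
    · have : Finite E := Module.finite_of_finite F
      have : Finite V := Module.finite_of_finite F
      refine exists_forall_smul_mem_imp_eq_zero_of_card_mul_card_le K.toAddSubgroup ?_
      calc Nat.card E * Nat.card K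
          = Nat.card F ^ (Module.finrank F K + Module.finrank F E) := by
            rw [Module.natCard_eq_pow_finrank (K := F) (V := E),
              Module.natCard_eq_pow_finrank (K := F) (V := K), ← pow_add, add_comm]
        _ ≤ Nat.card F ^ Module.finrank F V := Nat.pow_le_pow_right Nat.card_pos hK
        _ = Nat.card V := Module.natCard_eq_pow_finrank.symm
    · obtain ⟨v, hv⟩ := exists_forall_finrank_range_smulMod_le (E := E) K
      have hcodim := K.finrank_quotient_add_finrank
      have hinj := injective_smulMod_of_forall_finrank_range_le (by omega) hv
      refine ⟨v, fun a ha => (injective_iff_map_eq_zero _).1 hinj a ?_⟩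
      rwa [smulMod_apply, Submodule.mkQ_apply, Submodule.Quotient.mk_eq_zero]
  refine ⟨v, fun hv0 => one_ne_zero (hv 1 (by simp [hv0])), ?_⟩
  rw [Submodule.disjoint_def]
  intro x hxK hx
  obtain ⟨a, rfl⟩ := Submodule.mem_span_singleton.1 hx
  rw [hv a hxK, zero_smul]

theorem exists_finrank_eq_disjoint (K : Submodule F V) (s : ℕ)
    (hK : Module.finrank F K + Module.finrank F E * s ≤ Module.finrank F V) :
    ∃ D : Submodule E V, Module.finrank E D = s ∧ Disjoint K (D.restrictScalars F) := by
  have : FiniteDimensional E V := FiniteDimensional.right F E V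
  induction s with
  | zero => exact ⟨⊥, by simp, by simp⟩
  | succ s ih =>
    rw [mul_add_one] at hK
    obtain ⟨D, hD, hKD⟩ := ih (by omega)
    have hsup := Submodule.finrank_add_le_finrank_add_finrank K (D.restrictScalars F)
    rw [finrank_restrictScalars, hD] at hsup
    obtain ⟨v, hv0, hv⟩ := exists_ne_zero_disjoint_span_singleton (E := E)
      (K ⊔ D.restrictScalars F) (by omega)
    have hvD : v ∉ D := fun hvD => hv0 <| Submodule.disjoint_def.1 hv v
      (Submodule.mem_sup_right hvD) (Submodule.mem_span_singleton_self v)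
    refine ⟨D ⊔ span E {v}, by rw [Submodule.finrank_sup_span_singleton hvD, hD], ?_⟩
    rw [Submodule.restrictScalars_sup]
    exact hKD.disjoint_sup_right_of_disjoint_sup_left hv

theorem exists_finrank_eq_disjoint_or_codisjoint (K : Submodule F V) {s : ℕ}
    (hs : s ≤ Module.finrank E V) :
    ∃ D : Submodule E V, Module.finrank E D = s ∧
      (Disjoint (D.restrictScalars F) K ∨ Codisjoint (D.restrictScalars F) K) := by
  have hdim : Module.finrank F E * Module.finrank E V = Module.finrank F V :=
    Module.finrank_mul_finrank F E V
  have hsV := Nat.mul_le_mul_left (Module.finrank F E) hs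
  rcases le_total (Module.finrank F K + Module.finrank F E * s) (Module.finrank F V) with hK | hK
  · obtain ⟨D, hD, hKD⟩ := exists_finrank_eq_disjoint K s hK
    exact ⟨D, hD, Or.inl hKD.symm⟩
  · obtain ⟨L, hLK, hL⟩ := exists_submodule_le_finrank_eq_s6 K
      (r := Module.finrank F V - Module.finrank F E * s) (by omega)
    obtain ⟨D, hD, hLD⟩ := exists_finrank_eq_disjoint (E := E) L s (by omega)
    have hDL : IsCompl (D.restrictScalars F) L :=
      (Submodule.isCompl_iff_disjoint _ _ (by rw [finrank_restrictScalars, hD]; omega)).2 hLD.symm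
    exact ⟨D, hD, Or.inr (hDL.codisjoint.mono_right hLK)⟩

theorem exists_finrank_eq_finrank_map_eq_min {W : Type*} [AddCommGroup W] [Module F W]
    (f : V →ₗ[F] W) {s : ℕ} (hs : s ≤ Module.finrank E V) :
    ∃ D : Submodule E V, Module.finrank E D = s ∧
      Module.finrank F ((D.restrictScalars F).map f) =
        min (Module.finrank F E * s) (Module.finrank F (LinearMap.range f)) := by
  obtain ⟨D, rfl, hD⟩ := exists_finrank_eq_disjoint_or_codisjoint (LinearMap.ker f) hs
  refine ⟨D, rfl, ?_⟩
  rw [← finrank_restrictScalars]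
  rcases hD with hdisj | hcodisj
  · have hmap := (finrank_map_eq_iff_disjoint_ker f _).2 hdisj
    rw [min_eq_left (hmap ▸ Submodule.finrank_mono LinearMap.map_le_range), hmap]
  · rw [← Submodule.map_eq_range_iff.2 hcodisj, min_eq_right (Submodule.finrank_map_le _ _)]

end GeneralPosition

section RankSupport

variable {F E : Type*} [Field F] [Field E] [Algebra F E] {n : ℕ}

theorem wt_mono {A B : Set (Fin n → E)} (hAB : A ⊆ B) : wt F E n A ≤ wt F E n B :=
  Submodule.finrank_mono (sInf_le_sInf fun _ hU => hAB.trans hU)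

theorem compLeft_smul_fIncl (φ : E →ₗ[F] F) (a : E) (u : Fin n → F) :
    φ.compLeft (Fin n) (a • fIncl F E n u) = φ a • u := by
  ext j
  change φ (a * algebraMap F E (u j)) = φ a * u j
  rw [mul_comm, ← Algebra.smul_def, map_smul, smul_eq_mul, mul_comm]

theorem compLeft_smul_mem_of_mem_span_fIncl (φ : E →ₗ[F] F) {U : Submodule F (Fin n → F)}
    {x : Fin n → E} (hx : x ∈ span E (fIncl F E n '' U)) (a : E) :
    φ.compLeft (Fin n) (a • x) ∈ U := by
  induction hx using Submodule.span_induction generalizing a with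
  | mem x hx =>
    obtain ⟨u, hu, rfl⟩ := hx
    rw [compLeft_smul_fIncl]
    exact U.smul_mem _ hu
  | zero => simp
  | add x y _ _ hx hy =>
    rw [smul_add, map_add]
    exact U.add_mem (hx a) (hy a)
  | smul c x _ hx =>
    rw [smul_smul]
    exact hx _

theorem nondegenerate_mul_compr₂ {φ : E →ₗ[F] F} (hφ : φ ≠ 0) :
    ((LinearMap.mul F E).compr₂ φ).Nondegenerate := by
  have hsymm : ((LinearMap.mul F E).compr₂ φ).IsRefl := fun a b hab => by
    simpa [mul_comm] using hab
  rw [hsymm.nondegenerate_iff_separatingLeft]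
  intro a ha
  by_contra ha0
  refine hφ (LinearMap.ext fun e => ?_)
  simpa [mul_inv_cancel_left₀ ha0] using ha (a⁻¹ * e)

variable [FiniteDimensional F E]

theorem mem_span_fIncl_of_forall_compLeft_smul_mem {φ : E →ₗ[F] F} (hφ : φ ≠ 0)
    {U : Submodule F (Fin n → F)} {x : Fin n → E}
    (hx : ∀ a : E, φ.compLeft (Fin n) (a • x) ∈ U) : x ∈ span E (fIncl F E n '' U) := by
  let b := Module.finBasis F E
  let b' := LinearMap.BilinForm.dualBasis _ (nondegenerate_mul_compr₂ hφ) b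
  have hexpand : x = ∑ i, b' i • fIncl F E n (φ.compLeft (Fin n) (b i • x)) := by
    ext j
    calc x j = ∑ i, φ (x j * b i) • b' i := by
          conv_lhs => rw [← b'.sum_repr (x j)]
          simp only [b', LinearMap.BilinForm.dualBasis_repr_apply, LinearMap.compr₂_apply,
            LinearMap.mul_apply']
      _ = (∑ i, b' i • fIncl F E n (φ.compLeft (Fin n) (b i • x))) j := by
          simp [fIncl, Algebra.smul_def, mul_comm]
  rw [hexpand]
  exact Submodule.sum_mem _ fun i _ =>
    Submodule.smul_mem _ _ (Submodule.subset_span ⟨_, hx (b i), rfl⟩)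

theorem rankSupport_eq_map {φ : E →ₗ[F] F} (hφ : φ ≠ 0) (D : Submodule E (Fin n → E)) :
    rankSupport F E n D = (D.restrictScalars F).map (φ.compLeft (Fin n)) := by
  apply le_antisymm
  · exact sInf_le fun x hx => mem_span_fIncl_of_forall_compLeft_smul_mem hφ fun a =>
      Submodule.mem_map_of_mem (D.smul_mem a hx)
  · refine le_sInf fun U hU => Submodule.map_le_iff_le_comap.2 fun x hx => ?_
    simpa using compLeft_smul_mem_of_mem_span_fIncl φ (hU hx) 1

variable (F E n) in
theorem exists_forall_rankSupport_eq_map :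
    ∃ f : (Fin n → E) →ₗ[F] (Fin n → F), ∀ D : Submodule E (Fin n → E),
      rankSupport F E n D = (D.restrictScalars F).map f := by
  obtain ⟨φ, hφ⟩ := exists_ne (0 : Module.Dual F E)
  exact ⟨φ.compLeft (Fin n), rankSupport_eq_map hφ⟩

theorem wt_le_finrank_mul_finrank (D : Submodule E (Fin n → E)) :
    wt F E n D ≤ Module.finrank F E * Module.finrank E D := by
  obtain ⟨f, hf⟩ := exists_forall_rankSupport_eq_map F E n
  have : FiniteDimensional F D := FiniteDimensional.trans F E D
  rw [wt, hf, ← finrank_restrictScalars]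
  exact Submodule.finrank_map_le f (D.restrictScalars F)

theorem exists_le_finrank_eq_wt_eq_min (C : Submodule E (Fin n → E)) {s : ℕ}
    (hs : s ≤ Module.finrank E C) :
    ∃ D ≤ C, Module.finrank E D = s ∧
      wt F E n D = min (Module.finrank F E * s) (wt F E n C) := by
  obtain ⟨f, hf⟩ := exists_forall_rankSupport_eq_map F E n
  have : FiniteDimensional F C := FiniteDimensional.trans F E C
  let fC : C →ₗ[F] (Fin n → F) := f ∘ₗ C.subtype.restrictScalars F
  obtain ⟨D, hD, hmap⟩ := exists_finrank_eq_finrank_map_eq_min fC hs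
  have hwtC : wt F E n C = Module.finrank F (LinearMap.range fC) := by
    rw [wt, hf, LinearMap.range_comp, LinearMap.range_restrictScalars, Submodule.range_subtype]
  refine ⟨D.map C.subtype, Submodule.map_subtype_le C D, ?_, ?_⟩
  · rw [Submodule.finrank_map_subtype_eq, hD]
  · rw [hwtC, ← hmap, wt, hf, Submodule.restrictScalars_map, ← Submodule.map_comp]

end RankSupport

/-- Theorem 4.1 (2): for an `[n,k]` code `C` with `n ≥ k ≥ 1` and `s ≤ k`, the maximum of
`wt(D)` over `s`-dimensional subcodes `D ≤ C` equals `min{ms, wt(C)}`. -/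
theorem statement6 (F E : Type*) [Field F] [Field E] [Algebra F E]
    [FiniteDimensional F E] (m : ℕ) (hm : Module.finrank F E = m)
    (n k : ℕ) (hk : 1 ≤ k) (hkn : k ≤ n)
    (C : Submodule E (Fin n → E)) (hC : Module.finrank E C = k)
    (s : ℕ) (hs : s ≤ k) :
    (∃ D : Submodule E (Fin n → E), D ≤ C ∧ Module.finrank E D = s ∧
        wt F E n (D : Set (Fin n → E)) = min (m * s) (wt F E n (C : Set (Fin n → E)))) ∧
      (∀ D : Submodule E (Fin n → E), D ≤ C → Module.finrank E D = s →
        wt F E n (D : Set (Fin n → E)) ≤ min (m * s) (wt F E n (C : Set (Fin n → E)))) := by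
  subst hm hC
  refine ⟨exists_le_finrank_eq_wt_eq_min C hs, fun D hDC hD => le_min ?_ (wt_mono hDC)⟩
  exact hD ▸ wt_le_finrank_mul_finrank D
end

section
/- Let Y be a k-dimensional E-vector space, s ∈ {0,1,…,k}, and let B be an F-subspace of Y with dim_F(B) ≥ k(m−1) + s. Then 𝓛(B) ≥ s; that is, there exists an E-subspace V of Y with V ⊆ B and dim_E(V) ≥ s. -/
open Submodule Pointwise

/-!
Let `V` be the largest `E`-subspace of `B`. The `F`-linear map `Y → Hom_F(E, Y/B)` sending `y` to
`e ↦ [e • y]` has kernel `V`, so `dim_F (Y/V) ≤ m · dim_F (Y/B)`. Since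
`dim_F (Y/V) = m · dim_E (Y/V)`, cancelling `m` gives `dim_E (Y/V) ≤ dim_F (Y/B)`, while
`dim_F (Y/B) ≤ k - s` by hypothesis.
-/

section LinearCore

variable {F : Type*} (E : Type*) {Y : Type*} [Semiring F] [Semiring E] [AddCommMonoid Y]
  [Module F Y] [Module E Y]

/-- The largest `E`-submodule contained in the `F`-submodule `B`, encoded as the set of vectors
all of whose `E`-multiples lie in `B`. Its dimension is the linearity index of `B`. -/
def linearCore (B : Submodule F Y) : Submodule E Y where
  carrier := {y | ∀ e : E, e • y ∈ B}
  add_mem' hx hy e := by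
    rw [smul_add]
    exact B.add_mem (hx e) (hy e)
  zero_mem' e := by
    rw [smul_zero]
    exact B.zero_mem
  smul_mem' c y hy e := by
    rw [smul_smul]
    exact hy (e * c)

variable {E}

theorem le_linearCore_iff {V : Submodule E Y} {B : Submodule F Y} :
    V ≤ linearCore E B ↔ (V : Set Y) ⊆ B :=
  ⟨fun h y hy => one_smul E y ▸ h hy 1, fun h _ hy e => h (V.smul_mem e hy)⟩

theorem linearCore_subset (B : Submodule F Y) : (linearCore E B : Set Y) ⊆ B :=
  le_linearCore_iff.mp le_rfl

end LinearCore

section SmulQuotient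

variable {F : Type*} (E : Type*) {Y : Type*} [CommRing F] [Ring E] [Algebra F E]
  [AddCommGroup Y] [Module E Y] [Module F Y] [IsScalarTower F E Y] (B : Submodule F Y)

/-- The `F`-linear map sending `y` to `e ↦ [e • y]`, whose kernel is the linear core of `B`. -/
def smulQuotient : Y →ₗ[F] E →ₗ[F] Y ⧸ B :=
  (Algebra.lsmul F F Y).toLinearMap.flip.compr₂ B.mkQ

theorem smulQuotient_apply (y : Y) (e : E) : smulQuotient E B y e = B.mkQ (e • y) :=
  rfl

theorem ker_smulQuotient :
    LinearMap.ker (smulQuotient E B) = (linearCore E B).restrictScalars F := by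
  ext y
  calc y ∈ LinearMap.ker (smulQuotient E B)
      ↔ ∀ e : E, smulQuotient E B y e = 0 := LinearMap.ext_iff
    _ ↔ ∀ e : E, e • y ∈ B := by
      simp only [smulQuotient_apply, mkQ_apply, Quotient.mk_eq_zero]

theorem finrank_quotient_linearCore_le_mul [Nontrivial F] [Module.Free F E] [Module.Finite F E]
    [Module.Free F (Y ⧸ B)] [Module.Finite F (Y ⧸ B)] :
    Module.finrank F (Y ⧸ linearCore E B) ≤ Module.finrank F E * Module.finrank F (Y ⧸ B) := by
  let coreQuotientEquiv : (Y ⧸ linearCore E B) ≃ₗ[F] LinearMap.range (smulQuotient E B) :=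
    (Quotient.restrictScalarsEquiv F (linearCore E B)).symm ≪≫ₗ
      quotEquivOfEq _ _ (ker_smulQuotient E B).symm ≪≫ₗ (smulQuotient E B).quotKerEquivRange
  calc Module.finrank F (Y ⧸ linearCore E B)
      = Module.finrank F (LinearMap.range (smulQuotient E B)) := coreQuotientEquiv.finrank_eq
    _ ≤ Module.finrank F (E →ₗ[F] Y ⧸ B) := finrank_le _
    _ = Module.finrank F E * Module.finrank F (Y ⧸ B) := Module.finrank_linearMap F F E (Y ⧸ B)

end SmulQuotient

section DivisionRing

variable {F : Type*} (E : Type*) {Y : Type*} [Field F] [DivisionRing E] [Algebra F E]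
  [FiniteDimensional F E] [AddCommGroup Y] [Module E Y] [Module F Y] [IsScalarTower F E Y]
  (B : Submodule F Y)

theorem finrank_quotient_linearCore_le [FiniteDimensional F (Y ⧸ B)] :
    Module.finrank E (Y ⧸ linearCore E B) ≤ Module.finrank F (Y ⧸ B) := by
  refine Nat.le_of_mul_le_mul_left ?_ (Module.finrank_pos : 0 < Module.finrank F E)
  rw [Module.finrank_mul_finrank F E]
  exact finrank_quotient_linearCore_le_mul E B

theorem finrank_quotient_add_le_of_le_finrank [FiniteDimensional E Y] {s : ℕ}
    (hB : Module.finrank E Y * (Module.finrank F E - 1) + s ≤ Module.finrank F B) :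
    Module.finrank F (Y ⧸ B) + s ≤ Module.finrank E Y := by
  have : FiniteDimensional F Y := Module.Finite.trans E Y
  have hE : 1 ≤ Module.finrank F E := Module.finrank_pos
  have hsum : Module.finrank F (Y ⧸ B) + Module.finrank F B =
      Module.finrank E Y * (Module.finrank F E - 1) + Module.finrank E Y :=
    calc Module.finrank F (Y ⧸ B) + Module.finrank F B
        = Module.finrank F Y := finrank_quotient_add_finrank B
      _ = Module.finrank F E * Module.finrank E Y := (Module.finrank_mul_finrank F E Y).symm
      _ = (Module.finrank F E - 1 + 1) * Module.finrank E Y := by rw [Nat.sub_add_cancel hE]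
      _ = Module.finrank E Y * (Module.finrank F E - 1) + Module.finrank E Y := by ring
  lia

theorem statement9_general [FiniteDimensional E Y] {s : ℕ}
    (hB : Module.finrank E Y * (Module.finrank F E - 1) + s ≤ Module.finrank F B) :
    ∃ V : Submodule E Y, (V : Set Y) ⊆ (B : Set Y) ∧ s ≤ Module.finrank E V := by
  have : FiniteDimensional F Y := Module.Finite.trans E Y
  refine ⟨linearCore E B, linearCore_subset B, ?_⟩
  have hcodim := finrank_quotient_linearCore_le E B
  have hcodimB := finrank_quotient_add_le_of_le_finrank E B hB
  have hsum := finrank_quotient_add_finrank (linearCore E B)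
  lia

end DivisionRing

/-- Proposition 4.2: if `B` is an `F`-subspace of a `k`-dimensional `E`-vector space `Y`
with `dim_F B ≥ k(m-1) + s` for some `s ≤ k`, then `B` contains an `E`-subspace of
`E`-dimension at least `s`. -/
theorem statement9 (F E : Type*) [Field F] [Field E] [Algebra F E]
    [FiniteDimensional F E] (m : ℕ) (hm : Module.finrank F E = m)
    (Y : Type*) [AddCommGroup Y] [Module E Y] [Module F Y] [IsScalarTower F E Y]
    [FiniteDimensional E Y] (k : ℕ) (hY : Module.finrank E Y = k)
    (s : ℕ) (hs : s ≤ k)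
    (B : Submodule F Y) (hB : k * (m - 1) + s ≤ Module.finrank F B) :
    ∃ V : Submodule E Y, (V : Set Y) ⊆ (B : Set Y) ∧ s ≤ Module.finrank E V := by
  subst hm hY
  exact statement9_general E B hB
end

section
/- Let Y be a k-dimensional E-vector space with k ≥ 1 and let A be an F-subspace of Y. Then the following are equivalent: (1) A is a cutting (k−1)-blocking set of Y; (2) dim_F(A) ≥ (k−1)m + 1; (3) A is a cutting r-blocking set of Y for all r ∈ {0,1,…,k−1}. -/
open Submodule Pointwise

/-!
The equivalence reduces to the statement that some `E`-line meets `A` trivially as soon as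
`dim_F A + m ≤ dim_F Y`; everything else is dimension counting over `F`. The line `E y` meets `A`
trivially iff the `F`-linear map `e ↦ e • y mod A` from `E` to `Y ⧸ A` is injective. These maps
depend `F`-linearly on `y`, and for fixed `e ≠ 0` the value `e • y mod A` ranges over all of
`Y ⧸ A`. Over a finite field, counting shows that the kernels of `y ↦ e • y mod A`, `e ≠ 0`, do not
cover `Y`. Over an infinite field, choose `y` such that the kernel of `e ↦ e • y mod A` has minimal
dimension. If `c ≠ 0` lies in this kernel, then a perturbation of `y` shows that every `c • z mod A`
lies in the range, which is therefore `Y ⧸ A`, contradicting rank–nullity.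
-/

section Pencil

open Module LinearMap

variable {K V Q : Type*} [Field K] [Infinite K] [AddCommGroup V] [Module K V]
  [FiniteDimensional K V] [AddCommGroup Q] [Module K Q]

theorem exists_ne_zero_injective_add_smul {φ : V →ₗ[K] Q} (hφ : Function.Injective φ)
    (ψ : V →ₗ[K] Q) : ∃ t : K, t ≠ 0 ∧ Function.Injective (φ + t • ψ) := by
  obtain ⟨g, hg⟩ := φ.exists_leftInverse_of_injective (ker_eq_bot.2 hφ)
  obtain ⟨μ, hμ⟩ := ((End.finite_hasEigenvalue (R := K) (g ∘ₗ ψ)).insert 0).exists_notMem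
  obtain ⟨hμ0, hμ_eigen⟩ : μ ≠ 0 ∧ ¬ End.HasEigenvalue (g ∘ₗ ψ) μ := by
    simpa only [Set.mem_insert_iff, Set.mem_ofPred_eq, not_or] using hμ
  refine ⟨-μ⁻¹, neg_ne_zero.2 (inv_ne_zero hμ0), (injective_iff_map_eq_zero _).2 fun x hx => ?_⟩
  by_contra hx0
  have hgφ : g (φ x) = x := LinearMap.congr_fun hg x
  have hx_eq : x = μ⁻¹ • g (ψ x) := by
    simpa [hgφ, add_neg_eq_zero] using congrArg g hx
  have heigen : g (ψ x) = μ • x := ((eq_inv_smul_iff₀ hμ0).1 hx_eq).symm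
  exact hμ_eigen (End.hasEigenvalue_of_hasEigenvector
    ⟨End.mem_eigenspace_iff.2 heigen, hx0⟩)

theorem exists_ne_zero_finrank_ker_add_smul_le (φ ψ : V →ₗ[K] Q) :
    ∃ t : K, t ≠ 0 ∧ finrank K (ker (φ + t • ψ)) ≤ finrank K (ker φ) := by
  obtain ⟨C, hC⟩ := (ker φ).exists_isCompl
  have hφC : Function.Injective (φ.domRestrict C) :=
    injective_domRestrict_iff.2 hC.disjoint.symm
  obtain ⟨t, ht0, ht⟩ := exists_ne_zero_injective_add_smul hφC (ψ.domRestrict C)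
  have hdisj : Disjoint C (ker (φ + t • ψ)) := injective_domRestrict_iff.1 ht
  have hle := finrank_add_finrank_le_of_disjoint hdisj
  have heq := finrank_add_eq_of_isCompl hC
  exact ⟨t, ht0, by omega⟩

theorem exists_finrank_ker_add_smul_lt {φ ψ : V →ₗ[K] Q} {c : V} (hc : φ c = 0)
    (hψc : ψ c ∉ range φ) : ∃ t : K, finrank K (ker (φ + t • ψ)) < finrank K (ker φ) := by
  -- Dividing `Q` by the line through `ψ c` does not change the kernel of `φ`, but it puts the new
  -- vector `c` into the kernel of `φ + t • ψ`.
  let π := (K ∙ ψ c).mkQ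
  have hker_π : ker (π ∘ₗ φ) = ker φ := by
    refine le_antisymm (fun x hx => ?_) (ker_le_ker_comp φ π)
    rw [ker_comp, ker_mkQ] at hx
    exact disjoint_def.1 (disjoint_span_singleton_of_notMem hψc) _ (mem_range_self φ x) hx
  obtain ⟨t, ht0, ht⟩ := exists_ne_zero_finrank_ker_add_smul_le (π ∘ₗ φ) (π ∘ₗ ψ)
  rw [hker_π, ← comp_smul, ← comp_add] at ht
  have hψc0 : ψ c ≠ 0 := fun h => hψc (h ▸ zero_mem _)
  have hlt : ker (φ + t • ψ) < ker (π ∘ₗ (φ + t • ψ)) :=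
    SetLike.lt_iff_le_and_exists.2
      ⟨ker_le_ker_comp _ π, c, by simp [hc, π], by simp [hc, ht0, hψc0]⟩
  exact ⟨t, (finrank_lt_finrank_of_lt hlt).trans_le ht⟩

end Pencil

theorem natCard_ker_mul_natCard_of_surjective {R M N : Type*} [Ring R] [AddCommGroup M]
    [Module R M] [AddCommGroup N] [Module R N] {f : M →ₗ[R] N} (hf : Function.Surjective f) :
    Nat.card (LinearMap.ker f) * Nat.card N = Nat.card M := by
  rw [card_eq_card_quotient_mul_card (LinearMap.ker f),
    Nat.card_congr (f.quotKerEquivOfSurjective hf).toEquiv]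

section Bilinear

open Module LinearMap

variable {K V Y Q : Type*} [Field K] [AddCommGroup V] [Module K V] [FiniteDimensional K V]
  [AddCommGroup Y] [Module K Y] [AddCommGroup Q] [Module K Q]

theorem exists_injective_of_flip_surjective_of_infinite [Infinite K] (B : Y →ₗ[K] V →ₗ[K] Q)
    (hB : ∀ c ≠ 0, Function.Surjective (B.flip c)) (hVQ : finrank K V ≤ finrank K Q) :
    ∃ y, Function.Injective (B y) := by
  let nullity (y : Y) : ℕ := finrank K (ker (B y))
  let y := Function.argmin nullity
  refine ⟨y, ker_eq_bot.1 ?_⟩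
  by_contra hker
  obtain ⟨c, hc, hc0⟩ := exists_mem_ne_zero_of_ne_bot hker
  have hrange : range (B y) = ⊤ := by
    refine eq_top_iff'.2 fun q => ?_
    by_contra hq
    obtain ⟨z, rfl⟩ := hB c hc0 q
    obtain ⟨t, ht⟩ := exists_finrank_ker_add_smul_lt hc hq
    rw [← map_smul, ← map_add] at ht
    exact ht.not_ge (Function.argmin_le nullity (y + t • z))
  have hrank := finrank_range_add_finrank_ker (B y)
  have hpos := one_le_finrank_iff.2 hker
  rw [hrange, finrank_top] at hrank
  omega

theorem exists_injective_of_flip_surjective_of_finite [Finite K] [FiniteDimensional K Y]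
    (B : Y →ₗ[K] V →ₗ[K] Q) (hB : ∀ c ≠ 0, Function.Surjective (B.flip c))
    (hVQ : finrank K V ≤ finrank K Q) : ∃ y, Function.Injective (B y) := by
  by_contra! hnot
  have hzero (y : Y) : ∃ c ≠ 0, B y c = 0 := by
    simpa [injective_iff_map_eq_zero, and_comm] using hnot y
  have : Finite V := Module.finite_of_finite K
  have : Finite Y := Module.finite_of_finite K
  obtain ⟨c₀, hc₀, -⟩ := hzero 0
  have : Finite Q := .of_surjective _ (hB c₀ hc₀)
  have := Fintype.ofFinite {c : V // c ≠ 0}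
  have hcover : (⋃ c : {c : V // c ≠ 0}, (ker (B.flip c) : Set Y)) = Set.univ := by
    refine Set.eq_univ_of_forall fun y => ?_
    obtain ⟨c, hc0, hc⟩ := hzero y
    exact Set.mem_iUnion.2 ⟨⟨c, hc0⟩, hc⟩
  have hcount : Nat.card Y * Nat.card Q ≤ Nat.card Y * Nat.card {c : V // c ≠ 0} :=
    calc Nat.card Y * Nat.card Q
        ≤ (∑ c : {c : V // c ≠ 0}, Nat.card (ker (B.flip c))) * Nat.card Q := by
          rw [← Set.ncard_univ, ← hcover]
          exact Nat.mul_le_mul_right _ (Set.ncard_iUnion_le_of_fintype _)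
      _ = ∑ _c : {c : V // c ≠ 0}, Nat.card Y := by
          rw [Finset.sum_mul]
          exact Finset.sum_congr rfl fun c _ => natCard_ker_mul_natCard_of_surjective (hB c c.2)
      _ = Nat.card Y * Nat.card {c : V // c ≠ 0} := by
          rw [Finset.sum_const, Finset.card_univ, smul_eq_mul, mul_comm,
            Nat.card_eq_fintype_card (α := {c : V // c ≠ 0})]
  have hV_card : Nat.card {c : V // c ≠ 0} < Nat.card V :=
    Finite.card_subtype_lt (x := 0) (not_not_intro rfl)
  have hVQ_card : Nat.card V ≤ Nat.card Q := by
    rw [natCard_eq_pow_finrank (K := K) (V := V), natCard_eq_pow_finrank (K := K) (V := Q)]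
    exact Nat.pow_le_pow_right Nat.card_pos hVQ
  exact (hV_card.trans_le hVQ_card).not_ge (Nat.le_of_mul_le_mul_left hcount Nat.card_pos)

theorem exists_injective_of_flip_surjective [FiniteDimensional K Y] (B : Y →ₗ[K] V →ₗ[K] Q)
    (hB : ∀ c ≠ 0, Function.Surjective (B.flip c)) (hVQ : finrank K V ≤ finrank K Q) :
    ∃ y, Function.Injective (B y) := by
  cases finite_or_infinite K
  · exact exists_injective_of_flip_surjective_of_finite B hB hVQ
  · exact exists_injective_of_flip_surjective_of_infinite B hB hVQ

end Bilinear

section CuttingBlocking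

open Module

variable {F E Y : Type*} [Field F] [DivisionRing E] [Algebra F E] [AddCommGroup Y] [Module E Y]
  [Module F Y] [IsScalarTower F E Y]

theorem finrank_lt_add_iff [FiniteDimensional E Y] [Nontrivial Y] (A : Submodule F Y) :
    finrank F Y < finrank F A + finrank F E ↔
      (finrank E Y - 1) * finrank F E + 1 ≤ finrank F A := by
  obtain ⟨n, hn⟩ := Nat.exists_eq_add_one.2 (finrank_pos (R := E) (M := Y))
  rw [← finrank_mul_finrank F E Y, hn, Nat.add_sub_cancel, mul_comm, add_one_mul]
  omega

variable [FiniteDimensional F E]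

theorem exists_ne_zero_disjoint_span_singleton_s10 [FiniteDimensional F Y] {A : Submodule F Y}
    (hA : finrank F A + finrank F E ≤ finrank F Y) :
    ∃ y : Y, y ≠ 0 ∧ Disjoint A ((E ∙ y).restrictScalars F) := by
  let B : Y →ₗ[F] E →ₗ[F] Y ⧸ A := (Algebra.lsmul F F Y).toLinearMap.flip.compr₂ A.mkQ
  have hB : ∀ e ≠ 0, Function.Surjective (B.flip e) := fun e he q => by
    obtain ⟨y, rfl⟩ := A.mkQ_surjective q
    exact ⟨e⁻¹ • y, by simp [B, smul_inv_smul₀ he]⟩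
  have hdim : finrank F E ≤ finrank F (Y ⧸ A) := by
    have := A.finrank_quotient_add_finrank
    omega
  obtain ⟨y, hy⟩ := exists_injective_of_flip_surjective B hB hdim
  refine ⟨y, ?_, disjoint_def.2 fun x hxA hx => ?_⟩
  · rintro rfl
    exact one_ne_zero (hy (a₁ := 1) (a₂ := 0) (by simp only [map_zero, LinearMap.zero_apply]))
  · obtain ⟨e, rfl⟩ := mem_span_singleton.1 hx
    have he : e = 0 := (injective_iff_map_eq_zero _).1 hy e ((Quotient.mk_eq_zero A).2 hxA)
    rw [he, zero_smul]

theorem IsCuttingBlocking.finrank_lt_add [FiniteDimensional E Y] [Nontrivial Y]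
    {A : Submodule F Y} (h : IsCuttingBlocking E (A : Set Y) (finrank E Y - 1)) :
    finrank F Y < finrank F A + finrank F E := by
  have : FiniteDimensional F Y := Module.Finite.trans E Y
  by_contra! hA
  obtain ⟨y, hy0, hy⟩ := exists_ne_zero_disjoint_span_singleton_s10 (E := E) hA
  have hpos : 0 < finrank E Y := finrank_pos
  have hspan := h (E ∙ y) (by rw [finrank_span_singleton hy0]; omega)
  have hinter : (A : Set Y) ∩ (E ∙ y : Submodule E Y) = {0} := congrArg SetLike.coe hy.eq_bot
  rw [hinter, span_zero_singleton] at hspan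
  exact hy0 (span_singleton_eq_bot.1 hspan.symm)

theorem span_eq_of_finrank_lt_add {D : Submodule F Y} {V : Submodule E Y} [FiniteDimensional E V]
    (hDV : D ≤ V.restrictScalars F) (hV : finrank F V < finrank F D + finrank F E) :
    span E (D : Set Y) = V := by
  set W := span E (D : Set Y)
  have hWV : W ≤ V := span_le.2 hDV
  have : FiniteDimensional E W := finiteDimensional_of_le hWV
  have : FiniteDimensional F (W.restrictScalars F) :=
    (Module.Finite.trans E W : FiniteDimensional F W)
  have hDW : finrank F D ≤ finrank F (W.restrictScalars F) := finrank_mono subset_span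
  have hlt : finrank F E * finrank E V < finrank F E * (finrank E W + 1) :=
    calc finrank F E * finrank E V
        = finrank F V := finrank_mul_finrank F E V
      _ < finrank F D + finrank F E := hV
      _ ≤ finrank F W + finrank F E := Nat.add_le_add_right hDW _
      _ = finrank F E * (finrank E W + 1) := by rw [mul_add_one, finrank_mul_finrank]
  exact eq_of_le_of_finrank_le hWV (Nat.lt_succ_iff.1 (lt_of_mul_lt_mul_left' hlt))

theorem isCuttingBlocking_of_finrank_lt_add [FiniteDimensional E Y] {A : Submodule F Y}
    (hA : finrank F Y < finrank F A + finrank F E) (r : ℕ) :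
    IsCuttingBlocking E (A : Set Y) r := by
  intro V _
  have : FiniteDimensional F Y := Module.Finite.trans E Y
  have hsum := finrank_sup_add_finrank_inf_eq A (V.restrictScalars F)
  have hsup := finrank_le (A ⊔ V.restrictScalars F)
  have hV : finrank F (V.restrictScalars F) = finrank F V := rfl
  exact span_eq_of_finrank_lt_add (D := A ⊓ V.restrictScalars F) inf_le_right (by omega)

end CuttingBlocking

theorem statement10_general (F E : Type*) [Field F] [DivisionRing E] [Algebra F E]
    [FiniteDimensional F E] (Y : Type*) [AddCommGroup Y] [Module E Y] [Module F Y]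
    [IsScalarTower F E Y] [FiniteDimensional E Y] [Nontrivial Y] (A : Submodule F Y) :
    [IsCuttingBlocking E (A : Set Y) (Module.finrank E Y - 1),
      (Module.finrank E Y - 1) * Module.finrank F E + 1 ≤ Module.finrank F A,
      ∀ r < Module.finrank E Y, IsCuttingBlocking E (A : Set Y) r].TFAE := by
  rw [← finrank_lt_add_iff]
  tfae_have 1 → 2 := IsCuttingBlocking.finrank_lt_add
  tfae_have 2 → 3 := fun hA r _ => isCuttingBlocking_of_finrank_lt_add hA r
  tfae_have 3 → 1 := fun h => h _ (Nat.sub_one_lt Module.finrank_pos.ne')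
  tfae_finish

/-- Corollary 4.2 (1): for an `F`-subspace `A` of a `k`-dimensional `E`-vector space `Y`,
`A` is a cutting `(k-1)`-blocking set iff `dim_F A ≥ (k-1)m + 1`, iff `A` is a cutting
`r`-blocking set for all `r ∈ {0, …, k-1}`. -/
theorem statement10 (F E : Type*) [Field F] [Field E] [Algebra F E]
    [FiniteDimensional F E] (m : ℕ) (hm : Module.finrank F E = m)
    (Y : Type*) [AddCommGroup Y] [Module E Y] [Module F Y] [IsScalarTower F E Y]
    [FiniteDimensional E Y] (k : ℕ) (hY : Module.finrank E Y = k) (hk : 1 ≤ k)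
    (A : Submodule F Y) :
    (IsCuttingBlocking E (A : Set Y) (k - 1) ↔
        (k - 1) * m + 1 ≤ Module.finrank F A) ∧
      (IsCuttingBlocking E (A : Set Y) (k - 1) ↔
        ∀ r : ℕ, r + 1 ≤ k → IsCuttingBlocking E (A : Set Y) r) := by
  subst hm hY
  have : Nontrivial Y := Module.nontrivial_of_finrank_pos hk
  have h := statement10_general F E Y A
  exact ⟨h.out 0 1, h.out 0 2⟩
end

section
/- Let C be an [n,k] rank metric code with k ≥ 1, G a generator matrix of C, and U the F-span of the columns of G in the space of column vectors E^{[k]}. Then: (i) for any E-subspace B of E^k and D = {γG : γ ∈ B}, D is rank minimal in C if and only if the E-span of B‡ ∩ U equals B‡; (ii) for any r ∈ {0,1,…,k}, C is r-minimal if and only if U is a cutting r-blocking set of E^{[k]}. -/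
open Submodule Pointwise

/-- `D` is rank minimal in `C`: any subcode `B ≤ C` of the same dimension with
`χ(B) ⊆ χ(D)` satisfies `χ(B) = χ(D)`. -/
def RankMinimal (F E : Type*) [Field F] [Field E] [Algebra F E] (n : ℕ)
    (C D : Submodule E (Fin n → E)) : Prop :=
  ∀ B : Submodule E (Fin n → E), B ≤ C → Module.finrank E B = Module.finrank E D →
    rankSupport F E n (B : Set (Fin n → E)) ≤ rankSupport F E n (D : Set (Fin n → E)) →
    rankSupport F E n (B : Set (Fin n → E)) = rankSupport F E n (D : Set (Fin n → E))

/-- `C` is `r`-minimal with respect to the rank metric. -/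
def IsRMinimal (F E : Type*) [Field F] [Field E] [Algebra F E] (n : ℕ)
    (C : Submodule E (Fin n → E)) (r : ℕ) : Prop :=
  ∀ D : Submodule E (Fin n → E), D ≤ C → Module.finrank E D = r → RankMinimal F E n C D

/-- The dual `B^⊥` of `B ≤ E^k` with respect to the standard bilinear form. -/
noncomputable def dualSub (E : Type*) [Field E] (k : ℕ) (B : Submodule E (Fin k → E)) :
    Submodule E (Fin k → E) :=
  ⨅ γ ∈ B, LinearMap.ker (∑ i, γ i • (LinearMap.proj i : (Fin k → E) →ₗ[E] E))

/-!
A vector `u ∈ F^n` is orthogonal to `χ({γG : γ ∈ B})` iff `Gu ∈ B^⊥`, because the `F`-linear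
functionals on `E` separate points. As `u` runs through `F^n`, the vector `Gu` runs through `U`, so
inclusions of rank supports of subcodes are inclusions of traces `B^⊥ ∩ U`. Rank minimality of
`{γG : γ ∈ B}` therefore says that no subspace of the same dimension as `W = B^⊥` has a trace on `U`
strictly larger than `W ∩ U`. If `W ∩ U` spans `W` this is clear; otherwise there is room for a
further vector of `U` outside `W` next to the span of `W ∩ U`, and such a vector exists because `U`
spans `E^k`.
-/

section LinearAlgebra

theorem forall_le_range_iff {R M M' : Type*} [Semiring R] [AddCommMonoid M] [Module R M]
    [AddCommMonoid M'] [Module R M'] (f : M →ₗ[R] M') {p : Submodule R M' → Prop} :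
    (∀ D ≤ LinearMap.range f, p D) ↔ ∀ B : Submodule R M, p (B.map f) :=
  ⟨fun h _ => h _ LinearMap.map_le_range, fun h D hD => map_comap_eq_of_le hD ▸ h (D.comap f)⟩

variable {K V : Type*} [DivisionRing K] [AddCommGroup V] [Module K V]

theorem exists_le_finrank_eq [FiniteDimensional K V] (W : Submodule K V) {d : ℕ}
    (hW : Module.finrank K W ≤ d) (hd : d ≤ Module.finrank K V) :
    ∃ W' : Submodule K V, W ≤ W' ∧ Module.finrank K W' = d := by
  induction d, hW using Nat.le_induction with
  | base => exact ⟨W, le_rfl, rfl⟩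
  | succ d _ ih =>
    obtain ⟨W', hWW', rfl⟩ := ih (by omega)
    obtain ⟨v, -, hv⟩ := SetLike.exists_of_lt (lt_top_of_finrank_lt_finrank hd)
    exact ⟨W' ⊔ span K {v}, hWW'.trans le_sup_left, finrank_sup_span_singleton hv⟩

theorem span_inter_eq_iff_forall_finrank_eq [FiniteDimensional K V] {S : Set V}
    (hS : span K S = ⊤) (W : Submodule K V) :
    span K ((W : Set V) ∩ S) = W ↔ ∀ W' : Submodule K V,
      Module.finrank K W' = Module.finrank K W → (W : Set V) ∩ S ⊆ W' → (W' : Set V) ∩ S ⊆ W := by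
  have trace_le : span K ((W : Set V) ∩ S) ≤ W := span_le.2 Set.inter_subset_left
  constructor
  · intro hspan W' hdim htrace
    have hle : W ≤ W' := hspan ▸ span_le.2 htrace
    exact eq_of_le_of_finrank_eq hle hdim.symm ▸ Set.inter_subset_left
  · intro hmax
    by_contra hne
    have hlt : Module.finrank K (span K ((W : Set V) ∩ S)) < Module.finrank K W :=
      finrank_lt_finrank_of_lt (trace_le.lt_of_ne hne)
    obtain ⟨s, hs, hsW⟩ : ∃ s ∈ S, s ∉ W := by
      by_contra! hSW
      rw [Set.inter_eq_right.2 hSW, hS] at trace_le hne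
      exact hne (top_le_iff.1 trace_le).symm
    obtain ⟨W', hW', hdim⟩ := exists_le_finrank_eq (span K ((W : Set V) ∩ S) ⊔ span K {s})
      (by rwa [finrank_sup_span_singleton fun h => hsW (trace_le h)]) (finrank_le W)
    have htrace : (W : Set V) ∩ S ⊆ W' := span_le.1 (le_sup_left.trans hW')
    have hsW' : s ∈ W' := hW' (mem_sup_right (mem_span_singleton_self s))
    exact hsW (hmax W' hdim htrace ⟨hsW', hs⟩)

end LinearAlgebra

open scoped Matrix

section Dual

variable {K : Type*} [Field K] {k : ℕ}

theorem mem_dualSub {B : Submodule K (Fin k → K)} {v : Fin k → K} :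
    v ∈ dualSub K k B ↔ ∀ γ ∈ B, γ ⬝ᵥ v = 0 := by
  simp [dualSub, mem_iInf, dotProduct]

theorem dualSub_eq_orthogonal (B : Submodule K (Fin k → K)) :
    dualSub K k B = (Matrix.toBilin' (1 : Matrix (Fin k) (Fin k) K)).orthogonal B := by
  ext v
  simp [mem_dualSub, LinearMap.BilinForm.mem_orthogonal_iff, Matrix.toBilin'_apply']

theorem nondegenerate_toBilin'_one :
    (Matrix.toBilin' (1 : Matrix (Fin k) (Fin k) K)).Nondegenerate :=
  LinearMap.BilinForm.nondegenerate_toBilin'_of_det_ne_zero' _ (by simp)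

theorem finrank_add_finrank_dualSub (B : Submodule K (Fin k → K)) :
    Module.finrank K B + Module.finrank K (dualSub K k B) = k := by
  have hB : Module.finrank K B ≤ k := by simpa using finrank_le B
  rw [dualSub_eq_orthogonal, LinearMap.BilinForm.finrank_orthogonal nondegenerate_toBilin'_one,
    Module.finrank_fin_fun, Nat.add_sub_cancel' hB]

theorem dualSub_involutive : Function.Involutive (dualSub K k) := by
  intro B
  have hrefl : (Matrix.toBilin' (1 : Matrix (Fin k) (Fin k) K)).IsRefl := fun x y h => by
    simpa only [Matrix.toBilin'_apply', Matrix.one_mulVec, dotProduct_comm y] using h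
  simpa only [dualSub_eq_orthogonal] using
    LinearMap.BilinForm.orthogonal_orthogonal nondegenerate_toBilin'_one hrefl B

theorem dualSub_antitone : Antitone (dualSub K k) :=
  fun _ _ h _ hv => mem_dualSub.2 fun γ hγ => mem_dualSub.1 hv γ (h hγ)

theorem dualSub_le_dualSub_iff {B B' : Submodule K (Fin k → K)} :
    dualSub K k B ≤ dualSub K k B' ↔ B' ≤ B :=
  ⟨fun h => by simpa only [dualSub_involutive _] using dualSub_antitone h,
    fun h => dualSub_antitone h⟩

end Dual

section RankSupport

variable {F E : Type*} [Field F] [Field E] [Algebra F E] {n : ℕ}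

theorem exists_eq_sum_smul_fIncl_coord {ι : Type*} (b : Module.Basis ι F E) (a : Fin n → E) :
    ∃ s : Finset ι, a = ∑ i ∈ s, b i • fIncl F E n (b.coord i ∘ a) := by
  classical
  refine ⟨Finset.univ.biUnion fun j => (b.repr (a j)).support, funext fun j => ?_⟩
  have hsupp : (b.repr (a j)).support ⊆ Finset.univ.biUnion fun j => (b.repr (a j)).support :=
    Finset.subset_biUnion_of_mem (fun j => (b.repr (a j)).support) (Finset.mem_univ j)
  conv_lhs => rw [← b.linearCombination_repr (a j), Finsupp.linearCombination_apply,
    Finsupp.sum_of_support_subset _ hsupp _ (by simp)]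
  simp [fIncl, Algebra.smul_def, mul_comm]

theorem mem_span_fIncl_image_iff {W : Submodule F (Fin n → F)} {a : Fin n → E} :
    a ∈ span E (fIncl F E n '' W) ↔ ∀ φ : Module.Dual F E, φ ∘ a ∈ W := by
  constructor
  · intro ha
    induction ha using span_induction with
    | mem _ hx =>
      obtain ⟨w, hw, rfl⟩ := hx
      intro φ
      have hφ : φ ∘ fIncl F E n w = φ 1 • w := by
        ext j
        simp [fIncl, Algebra.algebraMap_eq_smul_one, mul_comm]
      exact hφ ▸ W.smul_mem _ hw
    | zero =>
      intro φ
      have hφ : φ ∘ (0 : Fin n → E) = 0 := funext fun _ => map_zero φ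
      exact hφ ▸ W.zero_mem
    | add x y _ _ hx hy =>
      intro φ
      have hφ : φ ∘ (x + y) = φ ∘ x + φ ∘ y := funext fun _ => map_add φ _ _
      exact hφ ▸ W.add_mem (hx φ) (hy φ)
    | smul c _ _ hx => exact fun φ => hx (φ ∘ₗ LinearMap.mulLeft F c)
  · intro ha
    let b := Module.Basis.ofVectorSpace F E
    obtain ⟨s, hs⟩ := exists_eq_sum_smul_fIncl_coord b a
    rw [hs]
    exact sum_mem fun i _ => smul_mem _ _ (subset_span ⟨_, ha (b.coord i), rfl⟩)

theorem rankSupport_le_iff {A : Set (Fin n → E)} {W : Submodule F (Fin n → F)} :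
    rankSupport F E n A ≤ W ↔ ∀ a ∈ A, ∀ φ : Module.Dual F E, φ ∘ a ∈ W := by
  constructor
  · refine fun h a ha φ => h (mem_sInf.2 fun W' hW' => ?_)
    exact mem_span_fIncl_image_iff.1 (hW' ha) φ
  · exact fun h => sInf_le fun a ha => mem_span_fIncl_image_iff.2 (h a ha)

theorem comp_dotProduct_eq_apply_dotProduct_fIncl (φ : Module.Dual F E) (a : Fin n → E)
    (u : Fin n → F) : (φ ∘ a) ⬝ᵥ u = φ (a ⬝ᵥ fIncl F E n u) := by
  simp only [dotProduct, map_sum]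
  refine Finset.sum_congr rfl fun j _ => ?_
  simp [fIncl, mul_comm (a j), ← Algebra.smul_def, mul_comm (u j)]

theorem mem_dualSub_rankSupport {A : Set (Fin n → E)} {u : Fin n → F} :
    u ∈ dualSub F n (rankSupport F E n A) ↔ ∀ a ∈ A, a ⬝ᵥ fIncl F E n u = 0 :=
  calc u ∈ dualSub F n (rankSupport F E n A)
      ↔ rankSupport F E n A ≤ LinearMap.ker ((dotProductBilin F F).flip u) := mem_dualSub
    _ ↔ ∀ a ∈ A, ∀ φ : Module.Dual F E, (φ ∘ a) ⬝ᵥ u = 0 := rankSupport_le_iff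
    _ ↔ ∀ a ∈ A, a ⬝ᵥ fIncl F E n u = 0 := by
      simp only [comp_dotProduct_eq_apply_dotProduct_fIncl, Module.forall_dual_apply_eq_zero_iff]

end RankSupport

section GeneratorMatrix

variable {F E : Type*} [Field F] [Field E] [Algebra F E] {n k : ℕ} {G : Matrix (Fin k) (Fin n) E}

theorem mem_span_range_col_iff {v : Fin k → E} :
    v ∈ span F (Set.range G.col) ↔ ∃ u : Fin n → F, G *ᵥ fIncl F E n u = v := by
  have hcomb (u : Fin n → F) : ∑ j, u j • G.col j = G *ᵥ fIncl F E n u := by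
    ext i
    simp [Matrix.mulVec, dotProduct, fIncl, Algebra.smul_def, mul_comm]
  simp only [mem_span_range_iff_exists_fun, hcomb]

theorem span_span_range_col_eq_top (hG : LinearIndependent E G.row) :
    span E (span F (Set.range G.col) : Set (Fin k → E)) = ⊤ := by
  rw [span_span_of_tower]
  apply eq_top_of_finrank_eq
  rw [← Matrix.rank_eq_finrank_span_cols, hG.rank_matrix, Module.finrank_fintype_fun_eq_card]

theorem mem_dualSub_rankSupport_map_iff {B : Submodule E (Fin k → E)} {u : Fin n → F} :
    u ∈ dualSub F n (rankSupport F E n (B.map G.vecMulLinear : Set (Fin n → E))) ↔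
      G *ᵥ fIncl F E n u ∈ dualSub E k B := by
  rw [mem_dualSub_rankSupport, mem_dualSub]
  simp [Matrix.dotProduct_mulVec]

theorem rankSupport_map_le_rankSupport_map_iff {B B' : Submodule E (Fin k → E)} :
    rankSupport F E n (B.map G.vecMulLinear : Set (Fin n → E)) ≤
        rankSupport F E n (B'.map G.vecMulLinear : Set (Fin n → E)) ↔
      (dualSub E k B' : Set (Fin k → E)) ∩ span F (Set.range G.col) ⊆ dualSub E k B := by
  rw [← dualSub_le_dualSub_iff]
  constructor
  · rintro h _ ⟨hv, hvU⟩
    obtain ⟨u, rfl⟩ := mem_span_range_col_iff.1 hvU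
    exact mem_dualSub_rankSupport_map_iff.1 (h (mem_dualSub_rankSupport_map_iff.2 hv))
  · intro h u hu
    rw [mem_dualSub_rankSupport_map_iff] at hu ⊢
    exact h ⟨hu, mem_span_range_col_iff.2 ⟨u, rfl⟩⟩

theorem finrank_map_vecMulLinear (hG : LinearIndependent E G.row)
    (B : Submodule E (Fin k → E)) :
    Module.finrank E (B.map G.vecMulLinear) = Module.finrank E B :=
  (equivMapOfInjective _ (Matrix.vecMul_injective_iff.2 hG) B).finrank_eq.symm

theorem rankMinimal_map_vecMulLinear_iff_forall (hG : LinearIndependent E G.row)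
    (B : Submodule E (Fin k → E)) :
    RankMinimal F E n (LinearMap.range G.vecMulLinear) (B.map G.vecMulLinear) ↔
      ∀ W : Submodule E (Fin k → E), Module.finrank E W = Module.finrank E (dualSub E k B) →
        (dualSub E k B : Set (Fin k → E)) ∩ span F (Set.range G.col) ⊆ W →
        (W : Set (Fin k → E)) ∩ span F (Set.range G.col) ⊆ dualSub E k B := by
  rw [RankMinimal, forall_le_range_iff, dualSub_involutive.surjective.forall]
  refine forall_congr' fun W => ?_
  have hdim : Module.finrank E (dualSub E k W) = Module.finrank E B ↔
      Module.finrank E W = Module.finrank E (dualSub E k B) := by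
    have hB := finrank_add_finrank_dualSub B
    have hW := finrank_add_finrank_dualSub W
    omega
  have hsupp (χ χ' : Submodule F (Fin n → F)) : (χ ≤ χ' → χ = χ') ↔ (χ ≤ χ' → χ' ≤ χ) :=
    forall_congr' fun h => ⟨Eq.ge, h.antisymm⟩
  rw [finrank_map_vecMulLinear hG, finrank_map_vecMulLinear hG, hdim, hsupp,
    rankSupport_map_le_rankSupport_map_iff, rankSupport_map_le_rankSupport_map_iff,
    dualSub_involutive W]

theorem rankMinimal_map_vecMulLinear_iff (hG : LinearIndependent E G.row)
    (B : Submodule E (Fin k → E)) :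
    RankMinimal F E n (LinearMap.range G.vecMulLinear) (B.map G.vecMulLinear) ↔
      span E ((dualSub E k B : Set (Fin k → E)) ∩ span F (Set.range G.col)) = dualSub E k B := by
  rw [rankMinimal_map_vecMulLinear_iff_forall hG,
    span_inter_eq_iff_forall_finrank_eq (span_span_range_col_eq_top hG)]

theorem isRMinimal_range_vecMulLinear_iff (hG : LinearIndependent E G.row) {r : ℕ} (hr : r ≤ k) :
    IsRMinimal F E n (LinearMap.range G.vecMulLinear) r ↔
      IsCuttingBlocking E (span F (Set.range G.col) : Set (Fin k → E)) r := by
  rw [IsRMinimal, forall_le_range_iff, IsCuttingBlocking, dualSub_involutive.surjective.forall]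
  refine forall_congr' fun V => ?_
  have hdim : Module.finrank E (dualSub E k V) = r ↔
      Module.finrank E V = Module.finrank E (Fin k → E) - r := by
    have hV := finrank_add_finrank_dualSub V
    rw [Module.finrank_fin_fun]
    omega
  rw [finrank_map_vecMulLinear hG, rankMinimal_map_vecMulLinear_iff hG, hdim,
    dualSub_involutive V, Set.inter_comm]

end GeneratorMatrix

theorem statement12_general (F E : Type*) [Field F] [Field E] [Algebra F E] (n k : ℕ)
    (C : Submodule E (Fin n → E)) (hC : Module.finrank E C = k)
    (G : Fin k → Fin n → E) (hG : Submodule.span E (Set.range G) = C)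
    (U : Submodule F (Fin k → E))
    (hU : U = Submodule.span F (Set.range fun j => fun i => G i j)) :
    (∀ B : Submodule E (Fin k → E),
        RankMinimal F E n C (B.map (Matrix.of G).vecMulLinear) ↔
          Submodule.span E ((dualSub E k B : Set (Fin k → E)) ∩ (U : Set (Fin k → E)))
            = dualSub E k B) ∧
      (∀ r : ℕ, r ≤ k →
        (IsRMinimal F E n C r ↔ IsCuttingBlocking E (U : Set (Fin k → E)) r)) := by
  subst hG hU
  have rows_independent : LinearIndependent E (Matrix.of G).row :=
    linearIndependent_iff_card_eq_finrank_span.2 ((Fintype.card_fin k).trans hC.symm)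
  have range_eq : LinearMap.range (Matrix.of G).vecMulLinear = span E (Set.range G) :=
    range_vecMulLinear _
  rw [← range_eq]
  exact ⟨rankMinimal_map_vecMulLinear_iff rows_independent,
    fun _ => isRMinimal_range_vecMulLinear_iff rows_independent⟩

/-- Theorem 4.3: let `C` be an `[n,k]` code with generator matrix `G` and `U` the `F`-span
of the columns of `G` in `E^k`. (i) For any `E`-subspace `B` of `E^k` and
`D = {γG : γ ∈ B}`, `D` is rank minimal in `C` iff the `E`-span of `B‡ ∩ U` equals `B‡`.
(ii) For any `r ∈ {0, …, k}`, `C` is `r`-minimal iff `U` is a cutting `r`-blocking set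
of `E^k`. -/
theorem statement12 (F E : Type*) [Field F] [Field E] [Algebra F E]
    [FiniteDimensional F E] (m : ℕ) (hm : Module.finrank F E = m)
    (n k : ℕ) (hk : 1 ≤ k) (hkn : k ≤ n)
    (C : Submodule E (Fin n → E)) (hC : Module.finrank E C = k)
    (G : Fin k → Fin n → E) (hG : Submodule.span E (Set.range G) = C)
    (U : Submodule F (Fin k → E))
    (hU : U = Submodule.span F (Set.range fun j => fun i => G i j)) :
    (∀ B : Submodule E (Fin k → E),
        RankMinimal F E n C (B.map (Matrix.of G).vecMulLinear) ↔
          Submodule.span E ((dualSub E k B : Set (Fin k → E)) ∩ (U : Set (Fin k → E)))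
            = dualSub E k B) ∧
      (∀ r : ℕ, r ≤ k →
        (IsRMinimal F E n C r ↔ IsCuttingBlocking E (U : Set (Fin k → E)) r)) := by
  exact statement12_general F E n k C hC G hG U hU
end
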